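/- Let 865/886 < γ < 1, a ∈ ℤ \ {0}, 1 < c < 3 with c ≠ 2, and A > 0 be fixed, and let ε > 0 be sufficiently small. Set θ = (443/55)γ − 173/22 − ε, and suppose X^{1−ε} ≤ N ≤ X, H = N^{1−γ+ε}, N^θ ≤ D ≤ N^{θ+ε/2}, and |t| ≤ X^{1/4−c}. Let c(d,h) be complex numbers with |c(d,h)| = 1, and define G(n) = Σ_{1 ≤ h ≤ H} F_h(n) e(t n^c − h n^γ) with F_h(n) = Σ_{d ≤ D, gcd(d,a)=1, d | n−a} c(d,h). Then | Σ_{N < n ≤ 2N} Λ(n) G(n) | ≪ N / (log N)^A. -/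

import Mathlib

/-- `e(t) = exp(2πit)`. -/
noncomputable def e (t : ℝ) : ℂ := Complex.exp (2 * Real.pi * Complex.I * t)

lemma norm_e (x : ℝ) : ‖e x‖ = 1 := by
  unfold e
  rw [show (2 * Real.pi * Complex.I * x : ℂ) = ((2 * Real.pi * x : ℝ) : ℂ) * Complex.I by
    push_cast; ring]
  exact Complex.norm_exp_ofReal_mul_I _

lemma e_add (x y : ℝ) : e (x + y) = e x * e y := by
  unfold e
  rw [← Complex.exp_add]
  congr 1
  push_cast
  ring

lemma e_conj (x : ℝ) : (starRingEnd ℂ) (e x) = e (-x) := by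
  unfold e
  rw [← Complex.exp_conj]
  congr 1
  simp
  left
  exact map_ofNat _ 2

/-- cotangent of `π x` -/
noncomputable def kcot (x : ℝ) : ℝ := Real.cos (Real.pi * x) / Real.sin (Real.pi * x)

/-- the reciprocal of `e x - 1` -/
noncomputable def kcc (x : ℝ) : ℂ := -(1 / 2) - Complex.I / 2 * (kcot x : ℂ)

lemma kcc_mul (x : ℝ) (hx : Real.sin (Real.pi * x) ≠ 0) : kcc x * (e x - 1) = 1 := by
  have h1 : e x = (Complex.cos (Real.pi * x) + Complex.sin (Real.pi * x) * Complex.I) ^ 2 := by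
    unfold e
    rw [← Complex.exp_mul_I, ← Complex.exp_nat_mul]
    congr 1
    push_cast
    ring
  have h2 : Complex.sin (Real.pi * x) ≠ 0 := by
    have : Complex.sin (Real.pi * x) = ((Real.sin (Real.pi * x) : ℝ) : ℂ) := by push_cast; rfl
    rw [this]
    exact_mod_cast hx
  rw [h1]
  unfold kcc kcot
  push_cast
  have h3 := Complex.sin_sq_add_cos_sq (Real.pi * x : ℂ)
  set s := Complex.sin (Real.pi * x)
  set c := Complex.cos (Real.pi * x)
  field_simp
  have hI := Complex.I_sq
  have hI3 : Complex.I ^ 3 = - Complex.I := by rw [pow_succ, hI]; ring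
  have h4 : c ^ 2 = 1 - s ^ 2 := by linear_combination h3
  have h5 : c ^ 3 = c - s ^ 2 * c := by linear_combination c * h3
  ring_nf
  rw [hI3, hI]
  ring_nf
  rw [h5, h4]
  ring

lemma kcot_nonneg {x : ℝ} (h0 : 0 < x) (h1 : x ≤ 1 / 2) : 0 ≤ kcot x := by
  unfold kcot
  have hp := Real.pi_pos
  apply div_nonneg
  · apply Real.cos_nonneg_of_mem_Icc
    constructor <;> nlinarith
  · apply Real.sin_nonneg_of_nonneg_of_le_pi <;> nlinarith

lemma ksin_ge {x : ℝ} (h0 : 0 < x) (h1 : x ≤ 1 / 2) : 2 * x ≤ Real.sin (Real.pi * x) := by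
  have hp := Real.pi_pos
  have := Real.mul_le_sin (x := Real.pi * x) (by positivity) (by nlinarith)
  calc 2 * x = 2 / Real.pi * (Real.pi * x) := by field_simp
    _ ≤ _ := this

lemma kcot_le {x : ℝ} (h0 : 0 < x) (h1 : x ≤ 1 / 2) : kcot x ≤ 1 / (2 * x) := by
  unfold kcot
  have := ksin_ge h0 h1
  apply div_le_div₀ (by norm_num) (Real.cos_le_one _) (by positivity) this

lemma kcot_anti {x y : ℝ} (h0 : 0 < x) (hxy : x ≤ y) (h1 : y ≤ 1 / 2) : kcot y ≤ kcot x := by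
  have hp := Real.pi_pos
  unfold kcot
  have := ksin_ge h0 (hxy.trans h1)
  apply div_le_div₀
  · apply Real.cos_nonneg_of_mem_Icc
    constructor <;> nlinarith
  · apply Real.cos_le_cos_of_nonneg_of_le_pi <;> nlinarith
  · linarith
  · apply Real.sin_le_sin_of_le_of_le_pi_div_two <;> nlinarith

lemma norm_kcc_sub (x y : ℝ) : ‖kcc x - kcc y‖ = |kcot x - kcot y| / 2 := by
  unfold kcc
  rw [show (-(1 / 2) - Complex.I / 2 * (kcot x : ℂ)) - (-(1 / 2) - Complex.I / 2 * (kcot y : ℂ))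
    = -(Complex.I / 2) * ((kcot x - kcot y : ℝ) : ℂ) by push_cast; ring]
  rw [norm_mul, Complex.norm_real]
  simp
  ring

lemma norm_kcc {x δ : ℝ} (hδ : 0 < δ) (h0 : δ ≤ x) (h1 : x ≤ 1 / 2) : ‖kcc x‖ ≤ 1 / (2 * δ) := by
  have hx : 0 < x := by linarith
  have h2 : ‖kcc x‖ ≤ 1 / 2 + kcot x / 2 := by
    unfold kcc
    refine (norm_sub_le _ _).trans ?_
    rw [norm_mul, Complex.norm_real, Real.norm_of_nonneg (kcot_nonneg hx h1)]
    simp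
    linarith
  have h3 := kcot_le hx h1
  have h4 : 1 / (2 * x) ≤ 1 / (2 * δ) := by
    apply one_div_le_one_div_of_le <;> linarith
  have h5 : (1 : ℝ) ≤ 1 / (2 * δ) := by
    rw [le_div_iff₀ (by positivity)]; linarith
  linarith

/-- forward difference -/
def dl (f : ℕ → ℝ) (k : ℕ) : ℝ := f (k + 1) - f k

lemma kl_aux (f : ℕ → ℝ) (δ : ℝ) (hδ : 0 < δ) (n : ℕ)
    (h1 : ∀ k ≤ n, δ ≤ dl f k) (h2 : ∀ k ≤ n, dl f k ≤ 1 / 2)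
    (h3 : ∀ k < n, dl f (k + 1) ≤ dl f k) :
    ‖∑ k ∈ Finset.range (n + 1), e (f k) - kcc (dl f n) * e (f (n + 1))‖
      ≤ 1 / (2 * δ) + kcot (dl f n) / 2 - kcot (dl f 0) / 2 := by
  have key : ∀ k ≤ n, e (f k) = kcc (dl f k) * (e (f (k + 1)) - e (f k)) := by
    intro k hk
    have : Real.sin (Real.pi * dl f k) ≠ 0 := by
      have := ksin_ge (x := dl f k) (by linarith [h1 k hk]) (h2 k hk)
      have := h1 k hk
      intro h; linarith
    have h := kcc_mul _ this
    have h' : e (f (k + 1)) = e (dl f k) * e (f k) := by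
      rw [← e_add]; congr 1; unfold dl; ring
    rw [h']
    linear_combination (-e (f k)) * h
  induction n with
  | zero =>
    have h := key 0 le_rfl
    have h' : (∑ k ∈ Finset.range (0 + 1), e (f k)) - kcc (dl f 0) * e (f (0 + 1))
       = - kcc (dl f 0) * e (f 0) := by
      simp only [zero_add, Finset.range_one, Finset.sum_singleton]
      linear_combination h
    rw [h', norm_mul, norm_neg, norm_e]
    have := norm_kcc hδ (h1 0 le_rfl) (h2 0 le_rfl)
    linarith
  | succ n ih =>
    have ih' := ih (fun k hk => h1 k (by omega)) (fun k hk => h2 k (by omega))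
      (fun k hk => h3 k (by omega)) (fun k hk => key k (by omega))
    have h := key (n + 1) le_rfl
    rw [Finset.sum_range_succ]
    have h' : (∑ k ∈ Finset.range (n + 1), e (f k)) + e (f (n + 1))
        - kcc (dl f (n + 1)) * e (f (n + 1 + 1))
       = ((∑ k ∈ Finset.range (n + 1), e (f k)) - kcc (dl f n) * e (f (n + 1)))
         + (kcc (dl f n) - kcc (dl f (n + 1))) * e (f (n + 1)) := by
      linear_combination h
    rw [h']
    refine (norm_add_le _ _).trans ?_
    rw [norm_mul, norm_e, norm_kcc_sub]
    have h4 : kcot (dl f n) ≤ kcot (dl f (n + 1)) := by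
      apply kcot_anti
      · linarith [h1 (n + 1) le_rfl]
      · exact h3 n (by omega)
      · exact h2 n (by omega)
    rw [abs_of_nonpos (by linarith)]
    linarith

/-- the Kuzmin and Landau inequality -/
lemma kl (f : ℕ → ℝ) (δ : ℝ) (hδ : 0 < δ) (hδ' : δ ≤ 1 / 2) (n : ℕ)
    (h1 : ∀ k, k + 1 < n → δ ≤ dl f k) (h2 : ∀ k, k + 1 < n → dl f k ≤ 1 / 2)
    (h3 : ∀ k, k + 2 < n → dl f (k + 1) ≤ dl f k) :
    ‖∑ k ∈ Finset.range n, e (f k)‖ ≤ 2 / δ := by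
  have hA : 1 ≤ 1 / (2 * δ) := by
    rw [le_div_iff₀ (by positivity)]; linarith
  have hB : 2 / δ = 4 * (1 / (2 * δ)) := by field_simp; norm_num
  rcases n with _ | _ | n
  · simp; positivity
  · simp [norm_e]; rw [hB]; linarith
  · have h := kl_aux f δ hδ n (fun k hk => h1 k (by omega)) (fun k hk => h2 k (by omega))
      (fun k hk => h3 k (by omega))
    rw [Finset.sum_range_succ]
    have e1 : ‖kcc (dl f n) * e (f (n + 1))‖ ≤ 1 / (2 * δ) := by
      rw [norm_mul, norm_e, mul_one]
      exact norm_kcc hδ (h1 n (by omega)) (h2 n (by omega))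
    have p0 : 0 < dl f 0 := by linarith [h1 0 (by omega)]
    have p1 : 0 < dl f n := by linarith [h1 n (by omega)]
    have e2 := kcot_nonneg p0 (h2 0 (by omega))
    have e3 := kcot_le p1 (h2 n (by omega))
    have e4 : 1 / (2 * dl f n) ≤ 1 / (2 * δ) := by
      apply one_div_le_one_div_of_le
      · linarith
      · linarith [h1 n (by omega)]
    have e5 := norm_e (f (n + 1))
    have e6 : (∑ k ∈ Finset.range (n + 1), e (f k)) + e (f (n + 1)) =
      ((∑ k ∈ Finset.range (n + 1), e (f k)) - kcc (dl f n) * e (f (n + 1))) +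
        kcc (dl f n) * e (f (n + 1)) + e (f (n + 1)) := by ring
    rw [e6]
    refine (norm_add₃_le).trans ?_
    rw [hB]
    linarith



lemma vdc_shift (G : ℕ → ℂ) (n Q j : ℕ) (hj : j ≤ Q)
    (hG : ∀ k, ¬ (Q ≤ k ∧ k < Q + n) → G k = 0) :
    ∑ k ∈ Finset.range (n + Q), G (k + j) = ∑ i ∈ Finset.range n, G (i + Q) := by
  rw [Finset.range_eq_Ico, Finset.range_eq_Ico, Finset.sum_Ico_add' G 0 (n + Q) j,
    Finset.sum_Ico_add' G 0 n Q]
  symm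
  apply Finset.sum_subset
  · intro x hx
    simp only [Finset.mem_Ico] at hx ⊢
    omega
  · intro x _ hx
    apply hG
    simp only [Finset.mem_Ico] at hx
    omega

lemma dist_sum (b : ℕ → ℝ) (Q : ℕ) (hb : ∀ q, 1 ≤ q → q < Q → 0 ≤ b q) (j : ℕ) (hj : j < Q) :
    ∑ i ∈ Finset.range Q, b (Nat.dist j i) ≤ b 0 + 2 * ∑ q ∈ Finset.Ico 1 Q, b q := by
  have h1 : ∑ i ∈ Finset.range Q, b (Nat.dist j i) = ∑ i ∈ Finset.range j, b (Nat.dist j i)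
      + (b 0 + ∑ i ∈ Finset.Ico (j + 1) Q, b (Nat.dist j i)) := by
    rw [← Finset.sum_range_add_sum_Ico _ hj, Finset.sum_range_succ, Nat.dist_self]
    ring
  have h2 : ∑ i ∈ Finset.range j, b (Nat.dist j i) = ∑ q ∈ Finset.Ico 1 (j + 1), b q := by
    refine Finset.sum_nbij' (fun i => j - i) (fun q => j - q) ?_ ?_ ?_ ?_ ?_
    all_goals simp only [Finset.mem_range, Finset.mem_Ico, Nat.dist]
    · intro a ha; omega
    · intro a ha; omega
    · intro a ha; omega
    · intro a ha; omega
    · intro a ha; congr 1; omega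
  have h3 : ∑ i ∈ Finset.Ico (j + 1) Q, b (Nat.dist j i) = ∑ q ∈ Finset.Ico 1 (Q - j), b q := by
    refine Finset.sum_nbij' (fun i => i - j) (fun q => q + j) ?_ ?_ ?_ ?_ ?_
    all_goals simp only [Finset.mem_Ico, Nat.dist]
    · intro a ha; omega
    · intro a ha; omega
    · intro a ha; omega
    · intro a ha; omega
    · intro a ha; congr 1; omega
  have h4 : ∀ R ≤ Q, ∑ q ∈ Finset.Ico 1 R, b q ≤ ∑ q ∈ Finset.Ico 1 Q, b q := by
    intro R hR
    apply Finset.sum_le_sum_of_subset_of_nonneg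
    · intro x hx
      simp only [Finset.mem_Ico] at hx ⊢
      omega
    · intro i hi _
      simp only [Finset.mem_Ico] at hi
      exact hb i hi.1 hi.2
  rw [h1, h2, h3]
  have := h4 (j + 1) hj
  have := h4 (Q - j) (by omega)
  linarith

lemma normSq_sum_eq {ι : Type*} (s : Finset ι) (u : ι → ℂ) :
    ((‖∑ i ∈ s, u i‖ ^ 2 : ℝ) : ℂ) = ∑ i ∈ s, ∑ j ∈ s, u i * (starRingEnd ℂ) (u j) := by
  rw [← Finset.sum_mul_sum, ← map_sum, Complex.mul_conj, Complex.normSq_eq_norm_sq]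

/-- the van der Corput inequality -/
lemma vdc (z : ℕ → ℂ) (n Q : ℕ) (P : ℝ) (hQ : 1 ≤ Q) (hn : (n : ℝ) ≤ P) (hQP : (Q : ℝ) ≤ P)
    (hz : ∀ k, ‖z k‖ ≤ 1) (B : ℕ → ℝ)
    (hB : ∀ q, 1 ≤ q → q < Q →
      ‖∑ k ∈ Finset.range (n - q), z (k + q) * (starRingEnd ℂ) (z k)‖ ≤ B q) :
    ‖∑ k ∈ Finset.range n, z k‖ ^ 2 ≤ 2 * P / Q * (P + 2 * ∑ q ∈ Finset.Ico 1 Q, B q) := by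
  classical
  set w : ℕ → ℂ := fun k => if Q ≤ k ∧ k < Q + n then z (k - Q) else 0 with hw
  have hw0 : ∀ k, ¬ (Q ≤ k ∧ k < Q + n) → w k = 0 := by
    intro k hk
    simp only [hw, if_neg hk]
  have hw1 : ∀ i, i < n → w (i + Q) = z i := by
    intro i hi
    simp only [hw]
    rw [if_pos (by omega)]
    congr 1
    omega
  set S := ∑ k ∈ Finset.range n, z k with hS
  have h1 : ∀ j < Q, ∑ k ∈ Finset.range (n + Q), w (k + j) = S := by
    intro j hj
    rw [vdc_shift w n Q j hj.le hw0]
    apply Finset.sum_congr rfl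
    intro i hi
    exact hw1 i (Finset.mem_range.1 hi)
  -- correlations
  have hcor : ∀ j q, j + q < Q → ∑ k ∈ Finset.range (n + Q),
      w (k + (j + q)) * (starRingEnd ℂ) (w (k + j))
      = ∑ k ∈ Finset.range (n - q), z (k + q) * (starRingEnd ℂ) (z k) := by
    intro j q hjq
    have := vdc_shift (fun k => w (k + q) * (starRingEnd ℂ) (w k)) n Q j (by omega) (by
      intro k hk
      simp only [hw0 k hk, map_zero, mul_zero])
    simp only [add_assoc] at this ⊢
    rw [this]
    rw [← Finset.sum_subset (s₁ := Finset.range (n - q)) (s₂ := Finset.range n)]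
    · apply Finset.sum_congr rfl
      intro i hi
      have hi' := Finset.mem_range.1 hi
      rw [hw1 i (by omega), show i + (Q + q) = (i + q) + Q by ring, hw1 (i + q) (by omega)]
    · intro x hx
      simp only [Finset.mem_range] at hx ⊢
      omega
    · intro x hx hx'
      simp only [Finset.mem_range] at hx hx'
      rw [hw0 (x + (Q + q)) (by omega), zero_mul]
  set b : ℕ → ℝ := fun q => if q = 0 then P else B q with hb
  have hbn : ∀ q, 1 ≤ q → q < Q → 0 ≤ b q := by
    intro q hq hq'
    simp only [hb]
    rw [if_neg (by omega)]
    exact (norm_nonneg _).trans (hB q hq hq')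
  have hle : ∀ j q, j + q < Q → ‖∑ k ∈ Finset.range (n + Q),
      w (k + (j + q)) * (starRingEnd ℂ) (w (k + j))‖ ≤ b q := by
    intro j q hjq
    rw [hcor j q hjq]
    simp only [hb]
    split_ifs with h
    · subst h
      refine le_trans ?_ hn
      refine (norm_sum_le _ _).trans ?_
      calc _ ≤ ∑ k ∈ Finset.range (n - 0), (1 : ℝ) := by
            apply Finset.sum_le_sum
            intro i _
            rw [norm_mul, RCLike.norm_conj]
            exact mul_le_one₀ (hz _) (norm_nonneg _) (hz _)
        _ = n := by simp
    · exact hB q (by omega) (by omega)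
  have hle2 : ∀ j < Q, ∀ i < Q, ‖∑ k ∈ Finset.range (n + Q),
      w (k + j) * (starRingEnd ℂ) (w (k + i))‖ ≤ b (Nat.dist j i) := by
    intro j hj i hi
    rcases le_total i j with h | h
    · have := hle i (j - i) (by omega)
      rw [show i + (j - i) = j by omega] at this
      rw [Nat.dist_eq_sub_of_le_right h]
      exact this
    · have := hle j (i - j) (by omega)
      rw [show j + (i - j) = i by omega] at this
      rw [Nat.dist_eq_sub_of_le h]
      rw [← Complex.norm_conj, map_sum]
      convert this using 3
      rw [map_mul, Complex.conj_conj, mul_comm]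
  -- Cauchy
  have h2 : (Q : ℂ) * S = ∑ k ∈ Finset.range (n + Q), ∑ j ∈ Finset.range Q, w (k + j) := by
    rw [Finset.sum_comm, Finset.sum_congr rfl (fun j hj => h1 j (Finset.mem_range.1 hj))]
    simp
  have h3 : ((Q : ℝ) * ‖S‖) ^ 2 ≤ (n + Q) * ∑ k ∈ Finset.range (n + Q),
      ‖∑ j ∈ Finset.range Q, w (k + j)‖ ^ 2 := by
    have : (Q : ℝ) * ‖S‖ ≤ ∑ k ∈ Finset.range (n + Q), ‖∑ j ∈ Finset.range Q, w (k + j)‖ := by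
      rw [show (Q : ℝ) * ‖S‖ = ‖(Q : ℂ) * S‖ by simp, h2]
      exact norm_sum_le _ _
    calc _ ≤ (∑ k ∈ Finset.range (n + Q), ‖∑ j ∈ Finset.range Q, w (k + j)‖) ^ 2 := by
          gcongr
      _ ≤ _ := by
          have := sq_sum_le_card_mul_sum_sq (s := Finset.range (n + Q))
            (f := fun k => ‖∑ j ∈ Finset.range Q, w (k + j)‖)
          simpa using this
  have h4 : ∑ k ∈ Finset.range (n + Q), ‖∑ j ∈ Finset.range Q, w (k + j)‖ ^ 2
      ≤ ∑ j ∈ Finset.range Q, ∑ i ∈ Finset.range Q, b (Nat.dist j i) := by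
    have h5 : ((∑ k ∈ Finset.range (n + Q), ‖∑ j ∈ Finset.range Q, w (k + j)‖ ^ 2 : ℝ) : ℂ)
        = ∑ j ∈ Finset.range Q, ∑ i ∈ Finset.range Q, ∑ k ∈ Finset.range (n + Q),
          w (k + j) * (starRingEnd ℂ) (w (k + i)) := by
      rw [Complex.ofReal_sum]
      simp_rw [normSq_sum_eq]
      rw [Finset.sum_comm]
      apply Finset.sum_congr rfl
      intro j _
      rw [Finset.sum_comm]
    have h6 : (∑ k ∈ Finset.range (n + Q), ‖∑ j ∈ Finset.range Q, w (k + j)‖ ^ 2 : ℝ)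
      = ‖((∑ k ∈ Finset.range (n + Q), ‖∑ j ∈ Finset.range Q, w (k + j)‖ ^ 2 : ℝ) : ℂ)‖ := by
      rw [Complex.norm_real, Real.norm_of_nonneg]
      positivity
    rw [h6, h5]
    refine (norm_sum_le _ _).trans (Finset.sum_le_sum fun j hj => ?_)
    refine (norm_sum_le _ _).trans (Finset.sum_le_sum fun i hi => ?_)
    exact hle2 j (Finset.mem_range.1 hj) i (Finset.mem_range.1 hi)
  have h7 : ∑ j ∈ Finset.range Q, ∑ i ∈ Finset.range Q, b (Nat.dist j i)
      ≤ Q * (P + 2 * ∑ q ∈ Finset.Ico 1 Q, B q) := by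
    have e1 : b 0 = P := by simp [hb]
    have e2 : ∑ q ∈ Finset.Ico 1 Q, b q = ∑ q ∈ Finset.Ico 1 Q, B q := by
      apply Finset.sum_congr rfl
      intro q hq
      simp only [Finset.mem_Ico] at hq
      simp only [hb]
      rw [if_neg (by omega)]
    calc _ ≤ ∑ j ∈ Finset.range Q, (b 0 + 2 * ∑ q ∈ Finset.Ico 1 Q, b q) :=
          Finset.sum_le_sum fun j hj => dist_sum b Q hbn j (Finset.mem_range.1 hj)
      _ = _ := by
          rw [e1, e2]
          simp
          ring
  have hQ0 : (0 : ℝ) < Q := by exact_mod_cast hQ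
  have hX : 0 ≤ P + 2 * ∑ q ∈ Finset.Ico 1 Q, B q := by
    have : 0 ≤ ∑ q ∈ Finset.Ico 1 Q, B q := by
      apply Finset.sum_nonneg
      intro q hq
      simp only [Finset.mem_Ico] at hq
      exact (norm_nonneg _).trans (hB q hq.1 hq.2)
    linarith
  have h8 : ((Q : ℝ) * ‖S‖) ^ 2 ≤ (2 * P) * (Q * (P + 2 * ∑ q ∈ Finset.Ico 1 Q, B q)) := by
    refine h3.trans ?_
    apply mul_le_mul
    · linarith
    · exact h4.trans h7
    · positivity
    · linarith
  rw [div_mul_eq_mul_div, le_div_iff₀ hQ0]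
  have : ‖S‖ ^ 2 * Q * Q ≤ 2 * P * (P + 2 * ∑ q ∈ Finset.Ico 1 Q, B q) * Q := by
    nlinarith
  exact le_of_mul_le_mul_right this hQ0


/-- shift difference -/
def sh (q : ℕ) (f : ℕ → ℝ) (k : ℕ) : ℝ := f (k + q) - f k

lemma dl_sh (q : ℕ) (f : ℕ → ℝ) : dl (sh q f) = sh q (dl f) := by
  funext k
  unfold dl sh
  rw [show k + 1 + q = k + q + 1 by ring]
  ring

lemma sh_eq (q : ℕ) (f : ℕ → ℝ) (k : ℕ) : sh q f k = ∑ i ∈ Finset.range q, dl f (k + i) := by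
  have := Finset.sum_range_sub (fun i => f (k + i)) q
  unfold sh dl
  simp only [add_zero] at this
  rw [← this]
  rfl

lemma sh_bounds (q : ℕ) (g : ℕ → ℝ) (k : ℕ) (a b : ℝ)
    (h : ∀ i < q, a ≤ dl g (k + i) ∧ dl g (k + i) ≤ b) : q * a ≤ sh q g k ∧ sh q g k ≤ q * b := by
  rw [sh_eq]
  constructor
  · calc _ = ∑ i ∈ Finset.range q, a := by simp
      _ ≤ _ := Finset.sum_le_sum fun i hi => (h i (Finset.mem_range.1 hi)).1
  · calc _ ≤ ∑ i ∈ Finset.range q, b :=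
          Finset.sum_le_sum fun i hi => (h i (Finset.mem_range.1 hi)).2
      _ = _ := by simp

lemma sh_anti (q : ℕ) (g : ℕ → ℝ) (k : ℕ)
    (h : ∀ i < q, dl g (k + i + 1) ≤ dl g (k + i)) : sh q g (k + 1) ≤ sh q g k := by
  rw [sh_eq, sh_eq]
  apply Finset.sum_le_sum
  intro i hi
  rw [show k + 1 + i = k + i + 1 by ring]
  exact h i (Finset.mem_range.1 hi)

lemma e_sh (q : ℕ) (f : ℕ → ℝ) (k : ℕ) :
    e (f (k + q)) * (starRingEnd ℂ) (e (f k)) = e (sh q f k) := by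
  rw [e_conj, ← e_add]
  rfl

lemma sum_inv_le (Q : ℕ) (P : ℝ) (hP : 1 ≤ P) (hQ : (Q : ℝ) ≤ P + 1) :
    ∑ s ∈ Finset.Ico 1 Q, 1 / (s : ℝ) ≤ 1 + Real.log P := by
  rcases Nat.lt_or_ge Q 2 with h | h
  · rw [Finset.Ico_eq_empty (by omega)]
    simp
    have := Real.log_nonneg hP
    linarith
  · have h1 : ∑ s ∈ Finset.Ico 1 Q, 1 / (s : ℝ) = ((harmonic (Q - 1) : ℚ) : ℝ) := by
      rw [Finset.sum_Ico_eq_sum_range, harmonic]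
      push_cast
      apply Finset.sum_congr rfl
      intro i _
      rw [one_div, add_comm]
    rw [h1]
    refine (harmonic_le_one_add_log _).trans ?_
    have h2 : ((Q - 1 : ℕ) : ℝ) ≤ P := by
      rw [Nat.cast_sub (by omega)]
      push_cast
      linarith
    have h3 : (0 : ℝ) < ((Q - 1 : ℕ) : ℝ) := by
      exact_mod_cast (by omega : 0 < Q - 1)
    linarith [Real.log_le_log h3 h2]

lemma sum_e_norm_le (f : ℕ → ℝ) (n : ℕ) : ‖∑ k ∈ Finset.range n, e (f k)‖ ≤ n := by
  refine (norm_sum_le _ _).trans ?_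
  simp [norm_e]

/-- second derivative test -/
lemma sd (f : ℕ → ℝ) (n : ℕ) (P l K : ℝ) (hn : (n : ℝ) ≤ P) (hP : 1 ≤ P) (hl : 0 < l) (hK : 1 ≤ K)
    (h1 : ∀ k, k + 2 < n → l ≤ dl (dl f) k) (h2 : ∀ k, k + 2 < n → dl (dl f) k ≤ K * l)
    (h3 : ∀ k, k + 3 < n → dl (dl f) (k + 1) ≤ dl (dl f) k) :
    ‖∑ k ∈ Finset.range n, e (f k)‖ ^ 2 ≤ 32 * K * (1 + Real.log P) * (P ^ 2 * l + 1 / l) := by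
  have hlog := Real.log_nonneg hP
  have main : ∀ Q : ℕ, 1 ≤ Q → (Q : ℝ) ≤ P → Q * (K * l) ≤ 1 / 2 →
      ‖∑ k ∈ Finset.range n, e (f k)‖ ^ 2 ≤
        2 * P / Q * (P + 4 * ((1 + Real.log P) / l)) := by
    intro Q hQ hQP hQl
    have := vdc (fun k => e (f k)) n Q P hQ hn hQP (fun k => (norm_e _).le)
      (fun s => 2 / (s * l)) (by
        intro q hq hqQ
        simp only [e_sh]
        have hq0 : (1 : ℝ) ≤ q := by exact_mod_cast hq
        have hqQ' : (q : ℝ) ≤ Q := by exact_mod_cast hqQ.le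
        have hA : q * (K * l) ≤ 1 / 2 := by
          refine le_trans ?_ hQl
          gcongr
        have hA' : q * l ≤ q * (K * l) := by
          gcongr
          nlinarith
        have hb : ∀ k, k + 1 < n - q → q * l ≤ dl (sh q f) k ∧ dl (sh q f) k ≤ q * (K * l) := by
          intro k hk
          rw [dl_sh]
          exact sh_bounds q (dl f) k l (K * l) (fun i hi => ⟨h1 _ (by omega), h2 _ (by omega)⟩)
        apply kl (sh q f) (q * l) (by positivity) (by linarith)
        · intro k hk
          exact (hb k hk).1
        · intro k hk
          exact (hb k hk).2.trans hA
        · intro k hk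
          rw [dl_sh]
          exact sh_anti q (dl f) k (fun i hi => h3 _ (by omega)))
    refine this.trans ?_
    have h5 : ∑ q ∈ Finset.Ico 1 Q, 2 / ((q : ℝ) * l) = 2 / l * ∑ s ∈ Finset.Ico 1 Q, 1 / (s : ℝ) := by
      rw [Finset.mul_sum]
      apply Finset.sum_congr rfl
      intro i _
      rw [div_mul_div_comm, mul_one, mul_comm l]
    rw [h5]
    have h6 := sum_inv_le Q P hP (by linarith)
    have : 2 * (2 / l * ∑ s ∈ Finset.Ico 1 Q, 1 / (s : ℝ)) ≤ 4 * ((1 + Real.log P) / l) := by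
      calc _ ≤ 2 * (2 / l * (1 + Real.log P)) := by gcongr
        _ = _ := by ring
    gcongr
  have hX : 0 ≤ P ^ 2 * l + 1 / l := by positivity
  have hPX : 2 * P ≤ P ^ 2 * l + 1 / l := by
    have : P ^ 2 * l + 1 / l - 2 * P = (P * l - 1) ^ 2 / l := by field_simp; ring
    have : 0 ≤ (P * l - 1) ^ 2 / l := by positivity
    linarith
  have hL1 : 1 ≤ 1 + Real.log P := by linarith
  rcases le_or_gt (P * (K * l)) (1 / 2) with hc | hc
  · -- Q = floor P
    have hf : (1 : ℝ) ≤ (⌊P⌋₊ : ℝ) := by exact_mod_cast Nat.le_floor (by simpa using hP)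
    have hf2 : (⌊P⌋₊ : ℝ) ≤ P := Nat.floor_le (by linarith)
    have hf3 : P ≤ 2 * (⌊P⌋₊ : ℝ) := by
      have := Nat.lt_floor_add_one P
      linarith
    have := main ⌊P⌋₊ (by exact_mod_cast hf) hf2 (by
      refine le_trans ?_ hc
      gcongr)
    refine this.trans ?_
    have hx : 2 * P / (⌊P⌋₊ : ℝ) ≤ 4 := by
      rw [div_le_iff₀ (by linarith)]; linarith
    have hPl : P ≤ 1 / l * (1 + Real.log P) := by
      have : P ≤ 1 / l := by
        rw [le_div_iff₀ hl]
        nlinarith [mul_pos (show 0 < P by linarith) hl]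
      have h0 : 0 < 1 / l := by positivity
      nlinarith
    calc _ ≤ 4 * (P + 4 * ((1 + Real.log P) / l)) := by
          have : 0 ≤ P + 4 * ((1 + Real.log P) / l) := by positivity
          gcongr
      _ ≤ 20 * (1 + Real.log P) * (1 / l) := by
          have : (1 + Real.log P) / l = 1 / l * (1 + Real.log P) := by ring
          rw [this]
          linarith
      _ ≤ 32 * K * (1 + Real.log P) * (P ^ 2 * l + 1 / l) := by
          have : 0 ≤ P ^ 2 * l := by positivity
          gcongr
          · linarith
          · linarith
  · rcases le_or_gt (K * l) (1 / 2) with hc2 | hc2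
    · have hKl : 0 < K * l := by positivity
      set y := 1 / (2 * (K * l)) with hy
      have hy1 : 1 ≤ y := by
        rw [hy, le_div_iff₀ (by positivity)]; linarith
      have hyP : y ≤ P := by
        rw [hy, div_le_iff₀ (by positivity)]; linarith
      have hf : (1 : ℝ) ≤ (⌊y⌋₊ : ℝ) := by exact_mod_cast Nat.le_floor (by simpa using hy1)
      have hf2 : (⌊y⌋₊ : ℝ) ≤ y := Nat.floor_le (by linarith)
      have hf3 : y ≤ 2 * (⌊y⌋₊ : ℝ) := by
        have := Nat.lt_floor_add_one y
        linarith
      have := main ⌊y⌋₊ (by exact_mod_cast hf) (hf2.trans hyP) (by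
        calc (⌊y⌋₊ : ℝ) * (K * l) ≤ y * (K * l) := by gcongr
          _ = 1 / 2 := by rw [hy]; field_simp)
      refine this.trans ?_
      have hx : 2 * P / (⌊y⌋₊ : ℝ) ≤ 8 * P * (K * l) := by
        have hyK : y * (K * l) = 1 / 2 := by rw [hy]; field_simp
        rw [div_le_iff₀ (by linarith)]
        have : 1 / 2 ≤ 2 * (⌊y⌋₊ : ℝ) * (K * l) := by
          rw [← hyK]; gcongr
        nlinarith
      calc _ ≤ 8 * P * (K * l) * (P + 4 * ((1 + Real.log P) / l)) := by
            have : 0 ≤ P + 4 * ((1 + Real.log P) / l) := by positivity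
            gcongr
        _ = 8 * K * (P ^ 2 * l) + 16 * K * (1 + Real.log P) * (2 * P) := by
            field_simp
            ring
        _ ≤ 8 * K * (P ^ 2 * l + 1 / l) * (1 + Real.log P)
            + 16 * K * (1 + Real.log P) * (P ^ 2 * l + 1 / l) := by
            have : 0 ≤ 1 / l := by positivity
            have h9 : 8 * K * (P ^ 2 * l) ≤ 8 * K * (P ^ 2 * l + 1 / l) := by
              gcongr; linarith
            have h10 : 8 * K * (P ^ 2 * l + 1 / l) * 1 ≤
              8 * K * (P ^ 2 * l + 1 / l) * (1 + Real.log P) := by gcongr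
            have h11 : 16 * K * (1 + Real.log P) * (2 * P) ≤
              16 * K * (1 + Real.log P) * (P ^ 2 * l + 1 / l) := by gcongr
            linarith
        _ ≤ _ := by
            have : 0 ≤ K * (1 + Real.log P) * (P ^ 2 * l + 1 / l) := by positivity
            nlinarith
    · have h9 : ‖∑ k ∈ Finset.range n, e (f k)‖ ^ 2 ≤ P ^ 2 := by
        have := (sum_e_norm_le f n).trans hn
        gcongr
      have h10 : P ^ 2 ≤ 2 * K * (P ^ 2 * l) := by nlinarith [sq_nonneg P]
      have h11 : 2 * K * (P ^ 2 * l) ≤ 32 * K * (P ^ 2 * l + 1 / l) := by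
        have : 0 ≤ 1 / l := by positivity
        have : 0 ≤ K * (1 / l) := by positivity
        have : 0 ≤ K * (P ^ 2 * l) := by positivity
        nlinarith
      have h12 : 32 * K * 1 * (P ^ 2 * l + 1 / l) ≤ 32 * K * (1 + Real.log P) * (P ^ 2 * l + 1 / l) := by
        gcongr
      linarith


lemma sum_inv_sqrt_aux (n : ℕ) : ∑ q ∈ Finset.Ico 1 (n + 1), 1 / √(q : ℝ) ≤ 2 * √(n : ℝ) := by
  induction n with
  | zero => simp
  | succ n ih =>
    rw [Finset.sum_Ico_succ_top (by omega)]
    have h1 : (0 : ℝ) < √((n + 1 : ℕ) : ℝ) := Real.sqrt_pos.2 (by positivity)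
    have ha2 : √(n : ℝ) ^ 2 = n := Real.sq_sqrt (by positivity)
    have hb2 : √((n + 1 : ℕ) : ℝ) ^ 2 = n + 1 := by
      rw [Real.sq_sqrt (by positivity)]; push_cast; ring
    have hab : √(n : ℝ) ≤ √((n + 1 : ℕ) : ℝ) := Real.sqrt_le_sqrt (by simp)
    have ha0 : 0 ≤ √(n : ℝ) := Real.sqrt_nonneg _
    generalize √(n : ℝ) = a at *
    generalize √((n + 1 : ℕ) : ℝ) = b at *
    have : 1 / b ≤ 2 * (b - a) := by
      rw [div_le_iff₀ h1]; nlinarith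
    linarith

lemma sum_inv_sqrt (Q : ℕ) : ∑ q ∈ Finset.Ico 1 Q, 1 / √(q : ℝ) ≤ 2 * √(Q : ℝ) := by
  rcases Q with _ | n
  · simp
  · refine (sum_inv_sqrt_aux n).trans ?_
    gcongr
    simp

set_option maxHeartbeats 1000000 in
/-- third derivative test -/
lemma td (f : ℕ → ℝ) (n : ℕ) (P y K : ℝ) (hn : (n : ℝ) ≤ P) (hP : 1 ≤ P) (hy : 0 < y) (hK : 1 ≤ K)
    (h1 : ∀ k, k + 3 < n → (y / P) ^ 3 ≤ dl (dl (dl f)) k)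
    (h2 : ∀ k, k + 3 < n → dl (dl (dl f)) k ≤ K * (y / P) ^ 3)
    (h3 : ∀ k, k + 4 < n → dl (dl (dl f)) (k + 1) ≤ dl (dl (dl f)) k) :
    ‖∑ k ∈ Finset.range n, e (f k)‖ ^ 2 ≤ 100 * K * (1 + Real.log P) * (P * y + P ^ 2 / y) := by
  have hlog := Real.log_nonneg hP
  have hKl : 1 ≤ K * (1 + Real.log P) := by nlinarith
  have hP0 : 0 < P := by linarith
  have htriv : ‖∑ k ∈ Finset.range n, e (f k)‖ ^ 2 ≤ P ^ 2 := by
    have := (sum_e_norm_le f n).trans hn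
    gcongr
  have hA : P * y + P ^ 2 / y ≤ 100 * K * (1 + Real.log P) * (P * y + P ^ 2 / y) := by
    have : 0 ≤ P * y + P ^ 2 / y := by positivity
    nlinarith
  have hB1 : 0 ≤ P * y := by positivity
  have hB2 : 0 ≤ P ^ 2 / y := by positivity
  rcases le_or_gt y 1 with hy1 | hy1
  · have : P ^ 2 ≤ P ^ 2 / y := by
      rw [le_div_iff₀ hy]; nlinarith [sq_nonneg P]
    linarith
  rcases le_or_gt P y with hyP | hyP
  · have : P ^ 2 ≤ P * y := by nlinarith
    linarith
  set r := P / y with hr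
  have hr1 : 1 < r := by rw [hr, lt_div_iff₀ hy]; linarith
  have hrP : r ≤ P := by rw [hr, div_le_iff₀ hy]; nlinarith
  have hrl : (y / P) ^ 3 = 1 / r ^ 3 := by rw [hr]; field_simp
  have hry : r * y = P := by rw [hr]; field_simp
  set Q := ⌊r⌋₊ with hQ
  have hf : (1 : ℝ) ≤ (Q : ℝ) := by exact_mod_cast Nat.le_floor (by simpa using hr1.le)
  have hf2 : (Q : ℝ) ≤ r := Nat.floor_le (by linarith)
  have hf3 : r ≤ 2 * (Q : ℝ) := by
    have := Nat.lt_floor_add_one r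
    linarith
  rw [hrl] at h1 h2
  set s := 6 * (K * (1 + Real.log P)) with hs
  have hs0 : 0 < s := by positivity
  have hv := vdc (fun k => e (f k)) n Q P (by exact_mod_cast hf) hn (hf2.trans hrP)
      (fun k => (norm_e _).le) (fun q => s * (y + √(r ^ 3) * (1 / √(q : ℝ)))) (by
    intro q hq hqQ
    simp only [e_sh]
    have hq0 : (1 : ℝ) ≤ q := by exact_mod_cast hq
    have hqQ' : (q : ℝ) ≤ Q := by exact_mod_cast hqQ.le
    have h := sd (sh q f) (n - q) P (q * (1 / r ^ 3)) K (by
        refine le_trans ?_ hn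
        exact_mod_cast Nat.sub_le n q) hP (by positivity) hK
      (by
        intro k hk
        rw [dl_sh, dl_sh]
        exact (sh_bounds q (dl (dl f)) k _ _ (fun i hi => ⟨h1 _ (by omega), h2 _ (by omega)⟩)).1)
      (by
        intro k hk
        rw [dl_sh, dl_sh]
        have := (sh_bounds q (dl (dl f)) k _ _
          (fun i hi => ⟨h1 _ (by omega), h2 _ (by omega)⟩)).2
        linarith)
      (by
        intro k hk
        rw [dl_sh, dl_sh]
        exact sh_anti q (dl (dl f)) k (fun i hi => h3 _ (by omega)))
    apply le_of_sq_le_sq _ (by positivity)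
    refine h.trans ?_
    have e1 : P ^ 2 * (q * (1 / r ^ 3)) ≤ y ^ 2 := by
      have : (q : ℝ) * (1 / r ^ 3) ≤ 1 / r ^ 2 := by
        calc (q : ℝ) * (1 / r ^ 3) ≤ r * (1 / r ^ 3) := by
              have := hqQ'.trans hf2
              gcongr
          _ = 1 / r ^ 2 := by field_simp
      calc P ^ 2 * (q * (1 / r ^ 3)) ≤ P ^ 2 * (1 / r ^ 2) := by gcongr
        _ = y ^ 2 := by rw [← hry]; field_simp
    have e2 : 1 / ((q : ℝ) * (1 / r ^ 3)) = (√(r ^ 3) * (1 / √(q : ℝ))) ^ 2 := by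
      rw [mul_pow, one_div_pow, Real.sq_sqrt (show 0 ≤ r ^ 3 by positivity),
        Real.sq_sqrt (show (0 : ℝ) ≤ q by positivity)]
      field_simp
    rw [e2]
    set v := √(r ^ 3) * (1 / √(q : ℝ)) with hv
    have hv0 : 0 ≤ v := by positivity
    have e3 : 32 * K * (1 + Real.log P) ≤ s ^ 2 := by
      rw [hs]; nlinarith
    calc _ ≤ s ^ 2 * (y ^ 2 + v ^ 2) := by gcongr
      _ ≤ (s * (y + v)) ^ 2 := by
        rw [mul_pow s (y + v) 2]
        gcongr
        nlinarith)
  refine hv.trans ?_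
  have h5 : ∑ q ∈ Finset.Ico 1 Q, s * (y + √(r ^ 3) * (1 / √(q : ℝ)))
      ≤ s * (Q * y + √(r ^ 3) * (2 * √(Q : ℝ))) := by
    rw [← Finset.mul_sum, Finset.sum_add_distrib, ← Finset.mul_sum]
    have := sum_inv_sqrt Q
    have h6 : ∑ q ∈ Finset.Ico 1 Q, y ≤ Q * y := by
      simp only [Finset.sum_const, Nat.card_Ico, nsmul_eq_mul]
      gcongr
      exact Nat.sub_le _ _
    gcongr
  have hQ0 : (0 : ℝ) < Q := by linarith
  have h7 : √(r ^ 3) * (2 * √(Q : ℝ)) ≤ 3 * r * Q := by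
    apply le_of_sq_le_sq _ (by positivity)
    rw [mul_pow, mul_pow, Real.sq_sqrt (by positivity), Real.sq_sqrt (by positivity)]
    calc r ^ 3 * (2 ^ 2 * (Q : ℝ)) = 4 * r ^ 2 * Q * r := by ring
      _ ≤ 4 * r ^ 2 * Q * (2 * Q) := by gcongr
      _ ≤ (3 * r * Q) ^ 2 := by nlinarith [mul_pos (show 0 < r ^ 2 by positivity) (show (0:ℝ) < Q ^ 2 by positivity)]
  calc 2 * P / Q * (P + 2 * ∑ q ∈ Finset.Ico 1 Q, s * (y + √(r ^ 3) * (1 / √(q : ℝ))))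
      ≤ 2 * P / Q * (P + 2 * (s * (Q * y + 3 * r * Q))) := by gcongr; exact h5.trans (by gcongr)
    _ = 2 * P ^ 2 / Q + 4 * P * s * (y + 3 * r) := by field_simp; ring
    _ ≤ 4 * P * y + 4 * P * s * (y + 3 * r) := by
        gcongr
        rw [div_le_iff₀ hQ0]
        calc 2 * P ^ 2 = 2 * P * y * r := by rw [← hry]; ring
          _ ≤ 2 * P * y * (2 * Q) := by gcongr
          _ = _ := by ring
    _ ≤ _ := by
        have hr' : P * r = P ^ 2 / y := by rw [hr]; ring
        have : 4 * P * s * (y + 3 * r) = 4 * s * (P * y + 3 * (P ^ 2 / y)) := by rw [← hr']; ring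
        rw [this, hs]
        nlinarith


/-- forward difference operator on functions of a real variable -/
def DD (ψ : ℝ → ℝ) (x : ℝ) : ℝ := ψ (x + 1) - ψ x

lemma DD_hasDeriv (j : ℕ) : ∀ (ψ ψ' : ℝ → ℝ), (∀ y > 0, HasDerivAt ψ (ψ' y) y) →
    ∀ y > 0, HasDerivAt (DD^[j] ψ) (DD^[j] ψ' y) y := by
  induction j with
  | zero => intro ψ ψ' h; simpa using h
  | succ j ih =>
    intro ψ ψ' h
    rw [Function.iterate_succ_apply, Function.iterate_succ_apply]
    apply ih
    intro y hy
    unfold DD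
    have h1 := (h (y + 1) (by linarith)).comp_add_const y 1
    exact h1.sub (h y hy)

lemma DD_mean (Φ : ℕ → ℝ → ℝ) (hΦ : ∀ i, ∀ y > 0, HasDerivAt (Φ i) (Φ (i + 1) y) y) (j : ℕ) :
    ∀ i, ∀ x : ℝ, x > 0 → ∃ ξ : ℝ, x ≤ ξ ∧ ξ ≤ x + j ∧ DD^[j] (Φ i) x = Φ (i + j) ξ := by
  induction j with
  | zero => intro i x hx; exact ⟨x, le_rfl, by simp, by simp⟩
  | succ j ih =>
    intro i x hx
    have hd := DD_hasDeriv j (Φ i) (Φ (i + 1)) (hΦ i)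
    obtain ⟨c, hc, hc2⟩ := exists_hasDerivAt_eq_slope (DD^[j] (Φ i)) (DD^[j] (Φ (i + 1)))
      (show x < x + 1 by linarith)
      (fun y hy => (hd y (by linarith [hy.1])).continuousAt.continuousWithinAt)
      (fun y hy => hd y (by linarith [hy.1]))
    obtain ⟨ξ, h1, h2, h3⟩ := ih (i + 1) c (by linarith [hc.1])
    refine ⟨ξ, by linarith [hc.1], by push_cast; linarith [hc.2], ?_⟩
    rw [Function.iterate_succ_apply']
    rw [show i + (j + 1) = i + 1 + j by ring, ← h3, hc2]
    simp [DD]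

/-- falling factorial -/
noncomputable def dp (s : ℝ) (i : ℕ) : ℝ := ∏ k ∈ Finset.range i, (s - k)

lemma dp_succ (s : ℝ) (i : ℕ) : dp s (i + 1) = dp s i * (s - i) := by
  unfold dp; rw [Finset.prod_range_succ]

/-- derivatives of `a u^γ - b u^c` -/
noncomputable def Ph (a b γ c : ℝ) (i : ℕ) (u : ℝ) : ℝ :=
  a * dp γ i * u ^ (γ - i) - b * dp c i * u ^ (c - i)

lemma Ph_deriv (a b γ c : ℝ) (i : ℕ) (y : ℝ) (hy : 0 < y) :
    HasDerivAt (Ph a b γ c i) (Ph a b γ c (i + 1) y) y := by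
  unfold Ph
  have h1 := (Real.hasDerivAt_rpow_const (x := y) (p := γ - i) (Or.inl hy.ne')).const_mul
    (a * dp γ i)
  have h2 := (Real.hasDerivAt_rpow_const (x := y) (p := c - i) (Or.inl hy.ne')).const_mul
    (b * dp c i)
  refine (h1.sub h2).congr_deriv ?_
  rw [dp_succ, dp_succ]
  push_cast
  rw [show γ - (i + 1 : ℝ) = γ - i - 1 by ring, show c - (i + 1 : ℝ) = c - i - 1 by ring]
  ring

lemma dl_seq (ψ : ℝ → ℝ) (u0 : ℝ) : dl (fun k : ℕ => ψ (u0 + k)) = fun k : ℕ => DD ψ (u0 + k) := by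
  funext k
  unfold dl DD
  push_cast
  rw [add_assoc]

set_option maxHeartbeats 1000000 in
lemma expE (γ c : ℝ) (hγ0 : 0 < γ) (hγ1 : γ < 1) (hc1 : 1 < c) (hc3 : c < 3) :
    ∃ C κ : ℝ, 0 < C ∧ 0 < κ ∧ ∀ (a b P0 u0 Y : ℝ) (n : ℕ), 0 < a → 1 ≤ P0 → 0 < Y →
      Y ^ 3 = a * P0 ^ γ → |b| * (4 * P0) ^ (c - γ) ≤ κ * a →
      (∀ k < n, P0 ≤ u0 + k ∧ u0 + k ≤ 4 * P0) →
      ‖∑ k ∈ Finset.range n, e (a * (u0 + k) ^ γ - b * (u0 + k) ^ c)‖ ^ 2 ≤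
        C * (1 + Real.log P0) * (P0 * Y + P0 ^ 2 / Y) := by
  set w := γ * (1 - γ) * (2 - γ) with hw
  have hw0 : 0 < w := by
    have : 0 < 1 - γ := by linarith
    have : 0 < 2 - γ := by linarith
    positivity
  set w0 := (w / 2) ^ (1 / 3 : ℝ) with hw0'
  have hw0p : 0 < w0 := by positivity
  have hw03 : w0 ^ 3 = w / 2 := by
    rw [hw0', ← Real.rpow_natCast, ← Real.rpow_mul (by positivity)]
    norm_num
  refine ⟨100 * 256 * 3 * (4 * w0 + 16 / w0), w / 36, by positivity, by positivity, ?_⟩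
  intro a b P0 u0 Y n ha hP0 hY hY3 hb hk
  have hP00 : 0 < P0 := by linarith
  have hlog := Real.log_nonneg hP0
  rcases Nat.eq_zero_or_pos n with hn0 | hn0
  · subst hn0
    simp
    positivity
  have hu0 : P0 ≤ u0 := by simpa using (hk 0 hn0).1
  have hn : (n : ℝ) ≤ 4 * P0 := by
    have := (hk (n - 1) (by omega)).2
    rw [Nat.cast_sub (by omega)] at this
    push_cast at this
    linarith
  have hb' : ∀ u, P0 ≤ u → u ≤ 4 * P0 → |b| * u ^ (c - γ) ≤ w / 36 * a := by
    intro u h1 h2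
    refine le_trans ?_ hb
    have hu : 0 < u := by linarith
    exact mul_le_mul_of_nonneg_left (Real.rpow_le_rpow hu.le h2 (by linarith)) (abs_nonneg b)
  have hd3 : dp γ 3 = w := by
    unfold dp; rw [Finset.prod_range_succ, Finset.prod_range_succ, Finset.prod_range_one, hw]
    push_cast; ring
  have hd4 : dp γ 4 = - (w * (3 - γ)) := by
    rw [dp_succ, hd3]; push_cast; ring
  have hc3' : |dp c 3| ≤ 6 := by
    have : dp c 3 = c * ((c - 1) * (c - 2)) := by
      unfold dp; rw [Finset.prod_range_succ, Finset.prod_range_succ, Finset.prod_range_one]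
      push_cast; ring
    rw [this, abs_mul, abs_mul, abs_of_pos (show 0 < c by linarith),
      abs_of_pos (show 0 < c - 1 by linarith)]
    have : |c - 2| ≤ 1 := abs_le.2 ⟨by linarith, by linarith⟩
    have h2 : (c - 1) * |c - 2| ≤ 2 * 1 := by gcongr; linarith
    calc c * ((c - 1) * |c - 2|) ≤ 3 * (2 * 1) := by gcongr
      _ = 6 := by norm_num
  have hc4' : |dp c 4| ≤ 18 := by
    rw [dp_succ, abs_mul]
    have : |c - (3 : ℕ)| ≤ 3 := by push_cast; exact abs_le.2 ⟨by linarith, by linarith⟩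
    calc |dp c 3| * |c - (3 : ℕ)| ≤ 6 * 3 := by gcongr
      _ = 18 := by norm_num
  have hsec : ∀ i : ℕ, |dp c i| ≤ 18 → ∀ u, P0 ≤ u → u ≤ 4 * P0 →
      |b * dp c i * u ^ (c - i)| ≤ |dp c i| * (w / 36 * a * u ^ (γ - i)) := by
    intro i hi u h1 h2
    have hu : 0 < u := by linarith
    rw [abs_mul, abs_mul, abs_of_pos (show 0 < u ^ (c - i) by positivity)]
    have : u ^ (c - i) = u ^ (c - γ) * u ^ (γ - i) := by
      rw [← Real.rpow_add hu]; congr 1; ring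
    rw [this]
    have := hb' u h1 h2
    calc |b| * |dp c i| * (u ^ (c - γ) * u ^ (γ - i)) =
        |dp c i| * ((|b| * u ^ (c - γ)) * u ^ (γ - i)) := by ring
      _ ≤ _ := by gcongr
  set G := a * w * (P0 ^ γ / P0 ^ 3) with hG
  have hG0 : 0 < G := by positivity
  have hPp : P0 ^ (γ - 3) = P0 ^ γ / P0 ^ 3 := by
    rw [Real.rpow_sub hP00]; norm_cast
  have hupow : ∀ u, P0 ≤ u → u ≤ 4 * P0 →
      P0 ^ γ / P0 ^ 3 / 64 ≤ u ^ (γ - 3) ∧ u ^ (γ - 3) ≤ P0 ^ γ / P0 ^ 3 := by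
    intro u h1 h2
    have hu : 0 < u := by linarith
    constructor
    · calc P0 ^ γ / P0 ^ 3 / 64 ≤ u ^ γ / P0 ^ 3 / 64 := by gcongr
        _ = u ^ γ / (4 * P0) ^ 3 := by field_simp; norm_num
        _ ≤ u ^ γ / u ^ 3 := by gcongr
        _ = u ^ (γ - 3) := by rw [Real.rpow_sub hu]; norm_cast
    · rw [← hPp]
      exact Real.rpow_le_rpow_of_nonpos hP00 h1 (by linarith)
  have hB3 : ∀ u, P0 ≤ u → u ≤ 4 * P0 → G / 128 ≤ Ph a b γ c 3 u ∧ Ph a b γ c 3 u ≤ 2 * G := by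
    intro u h1 h2
    have hu : 0 < u := by linarith
    have h3 := hsec 3 (by linarith) u h1 h2
    have h4 := hupow u h1 h2
    have h5 : |dp c 3| * (w / 36 * a * u ^ (γ - (3 : ℕ))) ≤ 6 * (w / 36 * a * u ^ (γ - (3 : ℕ))) := by
      gcongr
    have h6 := abs_le.1 (h3.trans h5)
    unfold Ph
    rw [hd3]
    push_cast at h6 ⊢
    have haw : 0 < a * w := by positivity
    have h7 : a * w * (P0 ^ γ / P0 ^ 3 / 64) ≤ a * w * u ^ (γ - 3) := by gcongr; exact h4.1
    have h8 : a * w * u ^ (γ - 3) ≤ a * w * (P0 ^ γ / P0 ^ 3) := by gcongr; exact h4.2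
    constructor
    · rw [hG]; linarith [h6.2]
    · rw [hG]
      have : 0 < a * w * u ^ (γ - 3) := by positivity
      linarith [h6.1]
  have hB4 : ∀ u, P0 ≤ u → u ≤ 4 * P0 → Ph a b γ c 4 u ≤ 0 := by
    intro u h1 h2
    have hu : 0 < u := by linarith
    have h3 := hsec 4 (by linarith) u h1 h2
    have h5 : |dp c 4| * (w / 36 * a * u ^ (γ - (4 : ℕ))) ≤ 18 * (w / 36 * a * u ^ (γ - (4 : ℕ))) := by
      gcongr
    have h6 := abs_le.1 (h3.trans h5)
    unfold Ph
    rw [hd4]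
    have : 0 < a * w * u ^ (γ - (4 : ℕ)) := by positivity
    have h7 : a * w * u ^ (γ - (4 : ℕ)) * 2 ≤ a * w * u ^ (γ - (4 : ℕ)) * (3 - γ) :=
      mul_le_mul_of_nonneg_left (by linarith) this.le
    have h8 : a * -(w * (3 - γ)) * u ^ (γ - (4 : ℕ)) = -(a * w * u ^ (γ - (4 : ℕ)) * (3 - γ)) := by ring
    rw [h8]
    generalize b * dp c 4 * u ^ (c - (4 : ℕ)) = s at *
    have h9 : 18 * (w / 36 * a * u ^ (γ - (4 : ℕ))) = a * w * u ^ (γ - (4 : ℕ)) / 2 := by ring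
    rw [h9] at h6
    have h10 := h6.1
    clear h3 h5 h9 h8 h6
    generalize a * w * u ^ (γ - (4 : ℕ)) = q at *
    linarith
  have hseq : (fun k : ℕ => e (a * (u0 + k) ^ γ - b * (u0 + k) ^ c))
      = fun k : ℕ => e ((fun k : ℕ => Ph a b γ c 0 (u0 + k)) k) := by
    funext k
    unfold Ph dp
    simp
  rw [show (∑ k ∈ Finset.range n, e (a * (u0 + k) ^ γ - b * (u0 + k) ^ c)) =
    ∑ k ∈ Finset.range n, e ((fun k : ℕ => Ph a b γ c 0 (u0 + k)) k) from
      Finset.sum_congr rfl (fun k _ => congrFun hseq k)]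
  have hddd : dl (dl (dl (fun k : ℕ => Ph a b γ c 0 (u0 + k)))) =
      fun k : ℕ => DD^[3] (Ph a b γ c 0) (u0 + k) := by
    rw [dl_seq, dl_seq, dl_seq]; rfl
  have hyP : (w0 * Y / (4 * P0)) ^ 3 = G / 128 := by
    rw [div_pow, mul_pow, hw03, hY3, hG]
    field_simp
    norm_num
  have hmv := DD_mean (Ph a b γ c) (fun i y hy => Ph_deriv a b γ c i y hy)
  have hmain := td (fun k : ℕ => Ph a b γ c 0 (u0 + k)) n (4 * P0) (w0 * Y) 256 hn (by linarith)
    (by positivity) (by norm_num)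
    (by
      intro k hk3
      rw [hddd, hyP]
      have hkk := (hk (k + 3) hk3).2
      push_cast at hkk
      have hk0 : (0 : ℝ) ≤ k := by positivity
      obtain ⟨ξ, h1, h2, h3⟩ := hmv 3 0 (u0 + k) (by linarith)
      simp only
      rw [h3]
      push_cast at h2
      exact (hB3 ξ (by linarith) (by linarith)).1)
    (by
      intro k hk3
      rw [hddd, hyP]
      have hkk := (hk (k + 3) hk3).2
      push_cast at hkk
      have hk0 : (0 : ℝ) ≤ k := by positivity
      obtain ⟨ξ, h1, h2, h3⟩ := hmv 3 0 (u0 + k) (by linarith)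
      simp only
      rw [h3]
      push_cast at h2
      have := (hB3 ξ (by linarith) (by linarith)).2
      simp only [zero_add]
      linarith)
    (by
      intro k hk3
      have hkk := (hk (k + 4) hk3).2
      push_cast at hkk
      have hk0 : (0 : ℝ) ≤ k := by positivity
      obtain ⟨ξ, h1, h2, h3⟩ := hmv 4 0 (u0 + k) (by linarith)
      push_cast at h2
      have h4 := hB4 ξ (by linarith) (by linarith)
      have h5 : dl (dl (dl (dl (fun k : ℕ => Ph a b γ c 0 (u0 + k))))) k = DD^[4] (Ph a b γ c 0) (u0 + k) := by
        rw [dl_seq, dl_seq, dl_seq, dl_seq]; rfl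
      rw [h3] at h5
      simp only [zero_add] at h5
      rw [← h5] at h4
      unfold dl at h4 ⊢
      linarith)
  refine hmain.trans ?_
  have hl4 : Real.log (4 * P0) ≤ 2 + Real.log P0 := by
    rw [Real.log_mul (by norm_num) (by linarith)]
    have : Real.log 4 ≤ 2 := by
      rw [show (4 : ℝ) = 2 ^ 2 by norm_num, Real.log_pow]
      have := Real.log_two_lt_d9
      push_cast
      linarith
    linarith
  calc 100 * 256 * (1 + Real.log (4 * P0)) * (4 * P0 * (w0 * Y) + (4 * P0) ^ 2 / (w0 * Y))
      ≤ 100 * 256 * (3 * (1 + Real.log P0)) * ((4 * w0 + 16 / w0) * (P0 * Y + P0 ^ 2 / Y)) := by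
        gcongr
        · have := Real.log_nonneg (show 1 ≤ 4 * P0 by linarith)
          linarith
        · have e1 : (4 * P0) ^ 2 / (w0 * Y) = 16 / w0 * (P0 ^ 2 / Y) := by field_simp; norm_num
          rw [e1]
          have : 0 ≤ w0 * (P0 ^ 2 / Y) := by positivity
          have : 0 ≤ 16 / w0 * (P0 * Y) := by positivity
          have e2 : (4 * w0 + 16 / w0) * (P0 * Y + P0 ^ 2 / Y) = 4 * P0 * (w0 * Y) +
              16 / w0 * (P0 ^ 2 / Y) + (4 * (w0 * (P0 ^ 2 / Y)) + 16 / w0 * (P0 * Y)) := by ring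
          rw [e2]
          linarith
    _ = _ := by ring


lemma ap_sum (A B d : ℕ) (hd : 0 < d) (p : ℕ → Prop) [DecidablePred p]
    (hp : ∀ k0 k, p k0 → (p k ↔ k ≡ k0 [MOD d])) :
    ∃ m0 n : ℕ, (∀ j < n, m0 + d * j ∈ Finset.Ioc A B) ∧
      ∀ z : ℕ → ℂ, ∑ m ∈ Finset.Ioc A B, (if p m then z m else 0) =
        ∑ j ∈ Finset.range n, z (m0 + d * j) := by
  by_cases hne : ((Finset.Ioc A B).filter p).Nonempty
  · set m0 := ((Finset.Ioc A B).filter p).min' hne with hm0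
    have hmem : m0 ∈ (Finset.Ioc A B).filter p := Finset.min'_mem _ _
    rw [Finset.mem_filter, Finset.mem_Ioc] at hmem
    have hj : ∀ j, j < (B - m0) / d + 1 → d * j ≤ B - m0 := by
      intro j hj
      have : j ≤ (B - m0) / d := by omega
      calc d * j ≤ d * ((B - m0) / d) := Nat.mul_le_mul_left d this
        _ ≤ B - m0 := Nat.mul_div_le _ _
    refine ⟨m0, (B - m0) / d + 1, ?_, ?_⟩
    · intro j h
      have := hj j h
      rw [Finset.mem_Ioc]
      omega
    · intro z
      rw [← Finset.sum_filter]
      symm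
      refine Finset.sum_bij (fun j _ => m0 + d * j) ?_ ?_ ?_ ?_
      · intro j h
        rw [Finset.mem_range] at h
        have := hj j h
        rw [Finset.mem_filter, Finset.mem_Ioc]
        refine ⟨by omega, (hp m0 _ hmem.2).2 ?_⟩
        simp [Nat.ModEq]
      · intro i _ j _ h
        have : d * i = d * j := by simpa using h
        exact Nat.eq_of_mul_eq_mul_left hd this
      · intro m hm
        have hle : m0 ≤ m := Finset.min'_le _ _ hm
        rw [Finset.mem_filter, Finset.mem_Ioc] at hm
        have := (hp m0 m hmem.2).1 hm.2
        obtain ⟨j, hj⟩ := (Nat.modEq_iff_dvd' hle).1 this.symm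
        refine ⟨j, ?_, by omega⟩
        rw [Finset.mem_range, Nat.lt_succ_iff, Nat.le_div_iff_mul_le hd, mul_comm]
        omega
      · intro j _; rfl
  · refine ⟨0, 0, by simp, ?_⟩
    intro z
    rw [← Finset.sum_filter, Finset.not_nonempty_iff_eq_empty.1 hne]
    simp

lemma ap_count (A B d : ℕ) (hd : 0 < d) (p : ℕ → Prop) [DecidablePred p]
    (hp : ∀ k0 k, p k0 → (p k ↔ k ≡ k0 [MOD d])) (z : ℕ → ℂ) (Z : ℝ) (hZ : 0 ≤ Z)
    (hz : ∀ m ∈ Finset.Ioc A B, p m → ‖z m‖ ≤ Z) (L : ℝ) (hL : (B : ℝ) - A ≤ L) (hL0 : 0 ≤ L) :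
    ‖∑ m ∈ Finset.Ioc A B, (if p m then z m else 0)‖ ≤ Z * (L / d + 1) := by
  obtain ⟨m0, n, h1, h2⟩ := ap_sum A B d hd p hp
  have hd' : (0 : ℝ) < d := by exact_mod_cast hd
  have hn : (n : ℝ) ≤ L / d + 1 := by
    rcases Nat.eq_zero_or_pos n with h | h
    · subst h; simp; positivity
    · have ha := Finset.mem_Ioc.1 (h1 0 h)
      have hb := Finset.mem_Ioc.1 (h1 (n - 1) (by omega))
      have h3 : A + d * (n - 1) ≤ B := by omega
      have h4 : (A : ℝ) + d * ((n : ℝ) - 1) ≤ B := by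
        have := h3
        rw [← Nat.cast_le (α := ℝ)] at this
        push_cast [Nat.cast_sub (show 1 ≤ n from h)] at this
        exact this
      have h5 : (n : ℝ) - 1 ≤ L / d := by
        rw [le_div_iff₀ hd']; nlinarith
      linarith
  have hs : ‖∑ m ∈ Finset.Ioc A B, (if p m then z m else 0)‖ ≤
      ∑ m ∈ Finset.Ioc A B, (if p m then Z else 0) := by
    refine (norm_sum_le _ _).trans (Finset.sum_le_sum ?_)
    intro m hm
    split_ifs with h
    · exact hz m hm h
    · simp
  refine hs.trans ?_
  have h6 := h2 (fun _ => (Z : ℂ))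
  have h7 : ∑ m ∈ Finset.Ioc A B, (if p m then Z else 0) = n * Z := by
    have : ((∑ m ∈ Finset.Ioc A B, (if p m then Z else 0) : ℝ) : ℂ) = ((n * Z : ℝ) : ℂ) := by
      rw [Finset.sum_const, Finset.card_range, nsmul_eq_mul] at h6
      push_cast
      rw [← h6]
      refine Finset.sum_congr rfl fun m _ => ?_
      split_ifs <;> simp
    exact_mod_cast this
  rw [h7, mul_comm]
  gcongr

lemma expAP (γ c : ℝ) (hγ0 : 0 < γ) (hγ1 : γ < 1) (hc1 : 1 < c) (hc3 : c < 3) :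
    ∃ C κ : ℝ, 0 < C ∧ 0 < κ ∧ ∀ (α β M0 Y : ℝ) (A B d : ℕ) (p : ℕ → Prop) [DecidablePred p],
      α ≠ 0 → 0 < d → (d : ℝ) ≤ M0 → 0 < Y → Y ^ 3 = |α| * M0 ^ γ →
      |β| * (4 * M0) ^ (c - γ) ≤ κ * |α| →
      (∀ m ∈ Finset.Ioc A B, M0 ≤ (m : ℝ) ∧ (m : ℝ) ≤ 4 * M0) →
      (∀ k0 k, p k0 → (p k ↔ k ≡ k0 [MOD d])) →
      ‖∑ m ∈ Finset.Ioc A B, (if p m then e (β * (m : ℝ) ^ c - α * (m : ℝ) ^ γ) else 0)‖ ^ 2 ≤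
        C * (1 + Real.log M0) * (M0 / d * Y + (M0 / d) ^ 2 / Y) := by
  obtain ⟨C, κ, hC, hκ, H⟩ := expE γ c hγ0 hγ1 hc1 hc3
  refine ⟨C, κ, hC, hκ, ?_⟩
  intro α β M0 Y A B d p _ hα hd hdM hY hY3 hβ hr hp
  obtain ⟨m0, n, h1, h2⟩ := ap_sum A B d hd p hp
  have hd' : (0 : ℝ) < d := by exact_mod_cast hd
  have hd1 : (1 : ℝ) ≤ d := by exact_mod_cast hd
  have hM0 : 0 < M0 := by linarith
  have key : ∀ (α β : ℝ), 0 < α → Y ^ 3 = α * M0 ^ γ → |β| * (4 * M0) ^ (c - γ) ≤ κ * α →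
      ‖∑ j ∈ Finset.range n, e (α * ((m0 + d * j : ℕ) : ℝ) ^ γ - β * ((m0 + d * j : ℕ) : ℝ) ^ c)‖ ^ 2 ≤
        C * (1 + Real.log M0) * (M0 / d * Y + (M0 / d) ^ 2 / Y) := by
    intro α β hα hY3 hβ
    have h := H (α * d ^ γ) (β * d ^ c) (M0 / d) (m0 / d) Y n (by positivity)
      ((one_le_div hd').2 hdM) hY
      (by
        rw [hY3, Real.div_rpow hM0.le hd'.le]
        field_simp)
      (by
        rw [abs_mul, abs_of_pos (show 0 < (d : ℝ) ^ c by positivity), ← mul_div_assoc,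
          Real.div_rpow (by positivity) hd'.le, Real.rpow_sub hd']
        have : |β| * (d : ℝ) ^ c * ((4 * M0) ^ (c - γ) / (d ^ c / d ^ γ)) =
          |β| * (4 * M0) ^ (c - γ) * d ^ γ := by
          field_simp
        rw [this]
        calc |β| * (4 * M0) ^ (c - γ) * d ^ γ ≤ κ * α * d ^ γ := by gcongr
          _ = _ := by ring)
      (by
        intro k hk
        have := hr _ (h1 k hk)
        push_cast at this
        have e1 : (m0 : ℝ) / d + k = (m0 + d * k) / d := by field_simp
        rw [e1]
        constructor
        · gcongr; exact this.1
        · rw [← mul_div_assoc]; gcongr; exact this.2)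
    have e2 : ∀ j ∈ Finset.range n, e (α * ((m0 + d * j : ℕ) : ℝ) ^ γ - β * ((m0 + d * j : ℕ) : ℝ) ^ c) =
        e (α * d ^ γ * ((m0 : ℝ) / d + j) ^ γ - β * d ^ c * ((m0 : ℝ) / d + j) ^ c) := by
      intro j _
      have e1 : ((m0 + d * j : ℕ) : ℝ) = d * ((m0 : ℝ) / d + j) := by push_cast; field_simp
      have e3 : (0 : ℝ) ≤ (m0 : ℝ) / d + j := by positivity
      rw [e1, Real.mul_rpow hd'.le e3, Real.mul_rpow hd'.le e3]
      congr 1; ring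
    rw [Finset.sum_congr rfl e2]
    refine h.trans ?_
    have hlog : Real.log (M0 / d) ≤ Real.log M0 :=
      Real.log_le_log (by positivity) (div_le_self hM0.le hd1)
    gcongr
  rw [h2 (fun m => e (β * (m : ℝ) ^ c - α * (m : ℝ) ^ γ))]
  rcases lt_or_gt_of_ne hα with h | h
  · rw [abs_of_neg h] at hY3 hβ
    have := key (-α) (-β) (by linarith) hY3 (by rwa [abs_neg])
    refine le_trans (le_of_eq ?_) this
    congr 2
    refine Finset.sum_congr rfl fun j _ => ?_
    congr 1; ring
  · rw [abs_of_pos h] at hY3 hβ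
    have := key α β h hY3 hβ
    refine le_trans (le_of_eq ?_) this
    congr 1
    rw [← RCLike.norm_conj, map_sum]
    congr 1
    refine Finset.sum_congr rfl fun j _ => ?_
    rw [e_conj]
    congr 1; ring


lemma ev_log (C s : ℝ) (hs : 0 < s) : ∃ N0 : ℝ, 1 ≤ N0 ∧ ∀ N : ℝ, N0 ≤ N → C * (1 + Real.log N) ≤ N ^ s := by
  have h1 : (fun N : ℝ => C * (1 + Real.log N)) =o[Filter.atTop] (fun N : ℝ => N ^ s) := by
    apply Asymptotics.IsLittleO.const_mul_left
    apply Asymptotics.IsLittleO.add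
    · rw [Asymptotics.isLittleO_const_left]
      right
      exact tendsto_norm_atTop_atTop.comp (tendsto_rpow_atTop hs)
    · exact isLittleO_log_rpow_atTop hs
  have h2 := h1.bound (show (0 : ℝ) < 1 by norm_num)
  obtain ⟨N0, h⟩ := Filter.eventually_atTop.1 h2
  refine ⟨max 1 N0, le_max_left _ _, fun N hN => ?_⟩
  have h3 := h N (le_trans (le_max_right _ _) hN)
  have h4 : 0 < N := by linarith [le_trans (le_max_left _ _) hN]
  rw [Real.norm_eq_abs, Real.norm_eq_abs, one_mul, abs_of_pos (show 0 < N ^ s by positivity)] at h3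
  exact (le_abs_self _).trans h3

lemma absorb (C L P Y S T : ℝ) (hC : 0 ≤ C * L) (hP : 0 < P) (hS : 0 < S) (hYS : S ≤ Y)
    (hYP : Y ≤ P / S) (hT : 2 * (C * L) ≤ S * T ^ 2) :
    C * L * (P * Y + P ^ 2 / Y) ≤ (P * T) ^ 2 := by
  have h1 : P * Y ≤ P ^ 2 / S := by
    calc P * Y ≤ P * (P / S) := by gcongr
      _ = _ := by ring
  have h2 : P ^ 2 / Y ≤ P ^ 2 / S := by gcongr
  calc C * L * (P * Y + P ^ 2 / Y) ≤ C * L * (P ^ 2 / S + P ^ 2 / S) := by gcongr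
    _ = (2 * (C * L)) * (P ^ 2 / S) := by ring
    _ ≤ (S * T ^ 2) * (P ^ 2 / S) := by gcongr
    _ = _ := by field_simp

/-- the weight -/
noncomputable def gg (γ c t : ℝ) (a : ℤ) (h d n : ℕ) : ℂ :=
  if (d : ℤ) ∣ (n : ℤ) - a then e (t * (n : ℝ) ^ c - h * (n : ℝ) ^ γ) else 0

lemma cop_of (d m k : ℕ) (a : ℤ) (hda : Int.gcd d a = 1) (h : (d : ℤ) ∣ ((m * k : ℕ) : ℤ) - a) :
    Nat.Coprime d m := by
  rw [Nat.coprime_iff_gcd_eq_one]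
  have h1 : ((Nat.gcd d m : ℕ) : ℤ) ∣ d := by exact_mod_cast Nat.gcd_dvd_left d m
  have h2 : ((Nat.gcd d m : ℕ) : ℤ) ∣ ((m * k : ℕ) : ℤ) := by
    exact_mod_cast (Nat.gcd_dvd_right d m).mul_right k
  have h3 : ((Nat.gcd d m : ℕ) : ℤ) ∣ a := by
    have := dvd_sub h2 (h1.trans h)
    simpa using this
  have h4 : ((Nat.gcd d m : ℕ) : ℤ) ∣ ((Int.gcd d a : ℕ) : ℤ) := Int.dvd_coe_gcd h1 h3
  rw [hda] at h4
  exact Nat.dvd_one.1 (by exact_mod_cast h4)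

lemma p_cond (d m : ℕ) (a : ℤ) (hda : Int.gcd d a = 1) (k0 k : ℕ)
    (h : (d : ℤ) ∣ ((m * k0 : ℕ) : ℤ) - a) :
    ((d : ℤ) ∣ ((m * k : ℕ) : ℤ) - a) ↔ k ≡ k0 [MOD d] := by
  have hc := cop_of d m k0 a hda h
  have h1 : ((d : ℤ) ∣ ((m * k : ℕ) : ℤ) - a) ↔ (m * k ≡ m * k0 [MOD d]) := by
    rw [Nat.modEq_iff_dvd]
    constructor
    · intro h2
      have := dvd_sub h h2
      simpa using this
    · intro h2
      have := dvd_sub h h2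
      simpa using this
  rw [h1]
  constructor
  · intro h2
    exact Nat.ModEq.cancel_left_of_coprime hc h2
  · intro h2
    exact h2.mul_left m

lemma typeI (γ c σ θ : ℝ) (hγ0 : 97 / 100 < γ) (hγ1 : γ < 1) (hc1 : 1 < c) (hc3 : c < 3)
    (hσ : 0 < σ) (hσ1 : σ ≤ 1 / 40) (hθ : 0 ≤ θ) (hθσ : θ + 8 * σ ≤ 1 / 5) :
    ∃ N0 : ℝ, 1 ≤ N0 ∧ ∀ N : ℝ, N0 ≤ N → ∀ (t : ℝ) (a : ℤ) (h d m : ℕ),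
      |t| * N ^ c ≤ N ^ (1 / 3 : ℝ) → 0 < h → (h : ℝ) ≤ N ^ σ → 0 < d → (d : ℝ) ≤ N ^ θ →
      0 < m → (m : ℝ) ≤ N ^ (2 * θ + 6 * σ) → Int.gcd d a = 1 → ∀ A B : ℕ,
      (∀ k ∈ Finset.Ioc A B, N ≤ ((m * k : ℕ) : ℝ) ∧ ((m * k : ℕ) : ℝ) ≤ 4 * N) →
      ‖∑ k ∈ Finset.Ioc A B, gg γ c t a h d (m * k)‖ ≤ N ^ (1 - σ) / (m * d) := by
  obtain ⟨C, κ, hC, hκ, H⟩ := expAP γ c (by linarith) hγ1 hc1 hc3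
  obtain ⟨N1, h11, h12⟩ := ev_log (2 * C) σ hσ
  obtain ⟨N2, h21, h22⟩ := ev_log (64 / κ) (γ - 1 / 3) (by linarith)
  refine ⟨max N1 N2, le_max_of_le_left h11, ?_⟩
  intro N hN t a h d m ht hh hhN hd hdN hm hmN hda A B hAB
  have hl1 := h12 N (le_trans (le_max_left _ _) hN)
  have hl2 := h22 N (le_trans (le_max_right _ _) hN)
  have hN1 : 1 ≤ N := h11.trans (le_trans (le_max_left _ _) hN)
  have hN0 : 0 < N := by linarith
  have hlogN := Real.log_nonneg hN1
  have hd' : (0 : ℝ) < d := by exact_mod_cast hd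
  have hm' : (0 : ℝ) < m := by exact_mod_cast hm
  have hm1 : (1 : ℝ) ≤ m := by exact_mod_cast hm
  have hh' : (0 : ℝ) < h := by exact_mod_cast hh
  have hh1 : (1 : ℝ) ≤ h := by exact_mod_cast hh
  have hdm : (d : ℝ) * m ≤ N ^ (3 * θ + 6 * σ) := by
    calc (d : ℝ) * m ≤ N ^ θ * N ^ (2 * θ + 6 * σ) := by gcongr
      _ = _ := by rw [← Real.rpow_add hN0]; congr 1; ring
  have hsum : ∑ k ∈ Finset.Ioc A B, gg γ c t a h d (m * k) =
      ∑ k ∈ Finset.Ioc A B, (if (d : ℤ) ∣ ((m * k : ℕ) : ℤ) - a then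
        e ((t * m ^ c) * (k : ℝ) ^ c - (h * m ^ γ) * (k : ℝ) ^ γ) else 0) := by
    refine Finset.sum_congr rfl fun k _ => ?_
    unfold gg
    congr 2
    push_cast
    rw [Real.mul_rpow hm'.le (by positivity), Real.mul_rpow hm'.le (by positivity)]
    ring
  set Y := ((h : ℝ) * N ^ γ) ^ (1 / 3 : ℝ) with hY
  have hY0 : 0 < Y := by positivity
  have hY3 : Y ^ 3 = (h : ℝ) * N ^ γ := by
    rw [hY, ← Real.rpow_natCast, ← Real.rpow_mul (by positivity)]
    norm_num
  have hYl : N ^ (3 * σ) ≤ Y := by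
    calc N ^ (3 * σ) ≤ N ^ (γ * (1 / 3)) := Real.rpow_le_rpow_of_exponent_le hN1 (by linarith)
      _ = (N ^ γ) ^ (1 / 3 : ℝ) := Real.rpow_mul hN0.le _ _
      _ ≤ Y := by
        rw [hY]
        apply Real.rpow_le_rpow (by positivity) _ (by norm_num)
        exact le_mul_of_one_le_left (by positivity) hh1
  have hYu : Y ≤ N ^ ((1 + σ) * (1 / 3)) := by
    rw [Real.rpow_mul hN0.le, hY]
    apply Real.rpow_le_rpow (by positivity) _ (by norm_num)
    rw [Real.rpow_add hN0, mul_comm, Real.rpow_one]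
    gcongr
    calc N ^ γ ≤ N ^ (1 : ℝ) := Real.rpow_le_rpow_of_exponent_le hN1 (by linarith)
      _ = N := Real.rpow_one N
  have hPl : N ^ (1 - (3 * θ + 6 * σ)) ≤ N / m / d := by
    rw [div_div, mul_comm (m : ℝ), Real.rpow_sub hN0, Real.rpow_one]
    gcongr
  have hP0 : 0 < N / m / d := by positivity
  have key := H (h * m ^ γ) (t * m ^ c) (N / m) Y A B d
    (fun k => (d : ℤ) ∣ ((m * k : ℕ) : ℤ) - a) (by positivity) hd
    (by
      rw [le_div_iff₀ hm']
      calc (d : ℝ) * m ≤ N ^ (3 * θ + 6 * σ) := hdm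
        _ ≤ N ^ (1 : ℝ) := Real.rpow_le_rpow_of_exponent_le hN1 (by linarith)
        _ = N := Real.rpow_one N) hY0
    (by
      rw [hY3, abs_of_pos (by positivity), Real.div_rpow hN0.le hm'.le]
      field_simp)
    (by
      rw [abs_mul, abs_of_pos (show 0 < (m : ℝ) ^ c by positivity), abs_of_pos (show 0 < (h : ℝ) * m ^ γ by positivity), ← mul_div_assoc,
        Real.div_rpow (by positivity) hm'.le, Real.rpow_sub hm', Real.mul_rpow (by norm_num) hN0.le,
        Real.rpow_sub hN0]
      have e1 : |t| * (m : ℝ) ^ c * (4 ^ (c - γ) * (N ^ c / N ^ γ) / (m ^ c / m ^ γ)) =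
        (|t| * N ^ c) * 4 ^ (c - γ) / N ^ γ * m ^ γ := by
        field_simp
      rw [e1]
      have e2 : (4 : ℝ) ^ (c - γ) ≤ 64 := by
        calc (4 : ℝ) ^ (c - γ) ≤ 4 ^ (3 : ℝ) :=
            Real.rpow_le_rpow_of_exponent_le (by norm_num) (by linarith)
          _ = 64 := by norm_num
      have e3 : 64 / κ ≤ N ^ (γ - 1 / 3) := by
        refine le_trans ?_ hl2
        exact le_mul_of_one_le_right (by positivity) (by linarith)
      rw [Real.rpow_sub hN0, div_le_div_iff₀ hκ (by positivity)] at e3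
      calc (|t| * N ^ c) * 4 ^ (c - γ) / N ^ γ * m ^ γ ≤ N ^ (1 / 3 : ℝ) * 64 / N ^ γ * m ^ γ := by
            gcongr
        _ ≤ κ * m ^ γ := by
            gcongr
            rw [div_le_iff₀ (by positivity)]
            linarith
        _ ≤ κ * (h * m ^ γ) := by
            gcongr
            exact le_mul_of_one_le_left (by positivity) hh1)
    (by
      intro k hk
      have := hAB k hk
      push_cast at this
      constructor
      · rw [div_le_iff₀ hm']; linarith [this.1]
      · rw [← mul_div_assoc, le_div_iff₀ hm']; linarith [this.2])
    (fun k0 k hk => p_cond d m a hda k0 k hk)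
  rw [hsum]
  have hb := absorb C (1 + Real.log N) (N / m / d) Y (N ^ (3 * σ)) (N ^ (-σ)) (by positivity) hP0
    (by positivity) hYl
    (by
      rw [le_div_iff₀ (by positivity)]
      calc Y * N ^ (3 * σ) ≤ N ^ ((1 + σ) * (1 / 3)) * N ^ (3 * σ) := by gcongr
        _ = N ^ ((1 + σ) * (1 / 3) + 3 * σ) := by rw [← Real.rpow_add hN0]
        _ ≤ N ^ (1 - (3 * θ + 6 * σ)) := Real.rpow_le_rpow_of_exponent_le hN1 (by linarith)
        _ ≤ _ := hPl)
    (by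
      have : N ^ (3 * σ) * (N ^ (-σ)) ^ 2 = N ^ σ := by
        rw [← Real.rpow_natCast, ← Real.rpow_mul hN0.le, ← Real.rpow_add hN0]
        congr 1; push_cast; ring
      rw [this]
      linarith)
  have hlog2 : Real.log (N / m) ≤ Real.log N :=
    Real.log_le_log (by positivity) (div_le_self hN0.le hm1)
  have hfin := key.trans (le_trans (by gcongr) hb)
  have := abs_le_of_sq_le_sq hfin (by positivity)
  rw [abs_of_nonneg (norm_nonneg _)] at this
  refine this.trans (le_of_eq ?_)
  rw [Real.rpow_sub hN0, Real.rpow_one, Real.rpow_neg hN0.le]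
  field_simp


lemma mv_rpow (s x y : ℝ) (hx : 0 < x) (hxy : x < y) :
    ∃ ξ, x < ξ ∧ ξ < y ∧ y ^ s - x ^ s = s * ξ ^ (s - 1) * (y - x) := by
  obtain ⟨ξ, h1, h2⟩ := exists_hasDerivAt_eq_slope (fun u : ℝ => u ^ s) (fun u : ℝ => s * u ^ (s - 1)) hxy
    (fun u hu => (Real.hasDerivAt_rpow_const (Or.inl (by linarith [hu.1]))).continuousAt.continuousWithinAt)
    (fun u hu => Real.hasDerivAt_rpow_const (Or.inl (by linarith [hu.1])))
  refine ⟨ξ, h1.1, h1.2, ?_⟩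
  have : y - x ≠ 0 := by linarith
  rw [h2]; field_simp

lemma rpow_diff (γ c l0 x y : ℝ) (hγ0 : 0 < γ) (hγ1 : γ < 1) (hc1 : 1 < c) (hl0 : 0 < l0)
    (hx : l0 ≤ x) (hx2 : x ≤ 2 * l0) (hy : l0 ≤ y) (hy2 : y ≤ 2 * l0) (hne : x ≠ y) :
    γ * (2 * l0) ^ (γ - 1) * |x - y| ≤ |x ^ γ - y ^ γ| ∧
    |x ^ γ - y ^ γ| ≤ l0 ^ (γ - 1) * |x - y| ∧
    |x ^ c - y ^ c| ≤ c * (2 * l0) ^ (c - 1) * |x - y| := by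
  have key : ∀ x y : ℝ, l0 ≤ x → y ≤ 2 * l0 → x < y →
      γ * (2 * l0) ^ (γ - 1) * |y - x| ≤ |y ^ γ - x ^ γ| ∧
      |y ^ γ - x ^ γ| ≤ l0 ^ (γ - 1) * |y - x| ∧
      |y ^ c - x ^ c| ≤ c * (2 * l0) ^ (c - 1) * |y - x| := by
    intro x y hx hy hxy
    have hx0 : 0 < x := by linarith
    have hyx : 0 < y - x := by linarith
    obtain ⟨ξ, h1, h2, h3⟩ := mv_rpow γ x y hx0 hxy
    obtain ⟨ζ, h4, h5, h6⟩ := mv_rpow c x y hx0 hxy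
    have hξ : 0 < ξ := by linarith
    have hζ : 0 < ζ := by linarith
    rw [h3, h6, abs_of_pos hyx, abs_of_pos (by positivity), abs_of_pos (by positivity)]
    refine ⟨?_, ?_, ?_⟩
    · gcongr ?_ * ?_ * _
      exact Real.rpow_le_rpow_of_nonpos hξ (by linarith) (by linarith)
    · gcongr ?_ * _
      calc γ * ξ ^ (γ - 1) ≤ 1 * ξ ^ (γ - 1) := by gcongr
        _ = ξ ^ (γ - 1) := one_mul _
        _ ≤ l0 ^ (γ - 1) := Real.rpow_le_rpow_of_nonpos hl0 (by linarith) (by linarith)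
    · gcongr ?_ * ?_ * _
      exact Real.rpow_le_rpow hζ.le (by linarith) (by linarith)
  rcases lt_or_gt_of_ne hne with h | h
  · have := key x y hx hy2 h
    rwa [abs_sub_comm x y, abs_sub_comm (x ^ γ), abs_sub_comm (x ^ c)]
  · exact key y x hy hx2 h

lemma rpow_third_le (x T : ℝ) (hT : 0 ≤ T) (hx : 0 ≤ x) (h : x ≤ T ^ 3) : x ^ (1 / 3 : ℝ) ≤ T := by
  calc x ^ (1 / 3 : ℝ) ≤ (T ^ 3) ^ (1 / 3 : ℝ) := Real.rpow_le_rpow hx h (by norm_num)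
    _ = T := by rw [← Real.rpow_natCast, ← Real.rpow_mul hT]; norm_num

lemma le_rpow_third (x T : ℝ) (hT : 0 ≤ T) (h : T ^ 3 ≤ x) : T ≤ x ^ (1 / 3 : ℝ) := by
  calc T = (T ^ 3) ^ (1 / 3 : ℝ) := by rw [← Real.rpow_natCast, ← Real.rpow_mul hT]; norm_num
    _ ≤ x ^ (1 / 3 : ℝ) := Real.rpow_le_rpow (by positivity) h (by norm_num)

set_option maxHeartbeats 4000000 in
lemma corr (γ c σ θ : ℝ) (hγ0 : 97 / 100 < γ) (hγ1 : γ < 1) (hc1 : 1 < c) (hc3 : c < 3)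
    (hσ : 0 < σ) (hσ1 : σ ≤ 1 / 40) (hθσ : θ + 8 * σ ≤ 1 / 5) :
    ∃ N0 : ℝ, 1 ≤ N0 ∧ ∀ N : ℝ, N0 ≤ N → ∀ (t : ℝ) (a : ℤ) (h d l0 l1 l2 : ℕ),
      |t| * N ^ c ≤ N ^ (1 / 3 : ℝ) → 0 < h → (h : ℝ) ≤ N ^ σ → 0 < d → (d : ℝ) ≤ N ^ θ →
      Int.gcd d a = 1 → 0 < l0 → (l0 : ℝ) ^ 2 ≤ 2 * N →
      l0 ≤ l1 → l1 ≤ 2 * l0 → l0 ≤ l2 → l2 ≤ 2 * l0 → l1 ≠ l2 → l1 ≡ l2 [MOD d] →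
      |(l1 : ℝ) - l2| ≤ 2 * d * N ^ (2 * σ) → ∀ A B : ℕ,
      (∀ m ∈ Finset.Ioc A B, N ≤ ((l1 * m : ℕ) : ℝ) ∧ ((l1 * m : ℕ) : ℝ) ≤ 2 * N) →
      ‖∑ m ∈ Finset.Ioc A B, gg γ c t a h d (l1 * m) * (starRingEnd ℂ) (gg γ c t a h d (l2 * m))‖
        ≤ N / (2 * l0) / d * N ^ (-(2 * σ)) := by
  obtain ⟨C, κ, hC, hκ, H⟩ := expAP γ c (by linarith) hγ1 hc1 hc3
  obtain ⟨N1, h11, h12⟩ := ev_log (2 * C) σ hσ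
  obtain ⟨N2, h21, h22⟩ := ev_log (192 / (κ * γ)) (γ - 1 / 3) (by linarith)
  obtain ⟨N3, h31, h32⟩ := ev_log 4 (γ - 1 / 2 - 15 * σ) (by linarith)
  obtain ⟨N4, h41, h42⟩ := ev_log 36 (1 - 4 * θ - 18 * σ) (by linarith)
  refine ⟨max (max N1 N2) (max N3 N4), le_max_of_le_left (le_max_of_le_left h11), ?_⟩
  intro N hN t a h d l0 l1 l2 ht hh hhN hd hdN hda hl0 hl0N hl1 hl1' hl2 hl2' hne hmod hdiff A B hAB
  have hl1 := h12 N (le_trans (le_trans (le_max_left _ _) (le_max_left _ _)) hN)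
  have hl2 := h22 N (le_trans (le_trans (le_max_right _ _) (le_max_left _ _)) hN)
  have hl3 := h32 N (le_trans (le_trans (le_max_left _ _) (le_max_right _ _)) hN)
  have hl4 := h42 N (le_trans (le_trans (le_max_right _ _) (le_max_right _ _)) hN)
  have hN1 : 1 ≤ N := h11.trans (le_trans (le_trans (le_max_left _ _) (le_max_left _ _)) hN)
  have hN0 : 0 < N := by linarith
  have hlogN := Real.log_nonneg hN1
  have hd' : (0 : ℝ) < d := by exact_mod_cast hd
  have hl0' : (0 : ℝ) < l0 := by exact_mod_cast hl0
  have hl01 : (1 : ℝ) ≤ l0 := by exact_mod_cast hl0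
  have hh' : (0 : ℝ) < h := by exact_mod_cast hh
  have hh1 : (1 : ℝ) ≤ h := by exact_mod_cast hh
  have hγp : 0 < γ := by linarith
  have hl1p : (0 : ℝ) < l1 := by exact_mod_cast (by omega : 0 < l1)
  have hl2p : (0 : ℝ) < l2 := by exact_mod_cast (by omega : 0 < l2)
  have hl1R : (l0 : ℝ) ≤ l1 := by exact_mod_cast ‹l0 ≤ l1›
  have hl2R : (l0 : ℝ) ≤ l2 := by exact_mod_cast ‹l0 ≤ l2›
  have hl1R' : (l1 : ℝ) ≤ 2 * l0 := by exact_mod_cast hl1'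
  have hl2R' : (l2 : ℝ) ≤ 2 * l0 := by exact_mod_cast hl2'
  have hneR : (l1 : ℝ) ≠ l2 := by exact_mod_cast hne
  obtain ⟨r1, r2, r3⟩ := rpow_diff γ c l0 l1 l2 hγp hγ1 hc1 hl0' hl1R hl1R' hl2R hl2R' hneR
  set δ := |(l1 : ℝ) - l2| with hδ
  have hδ1 : 1 ≤ δ := by
    have : (1 : ℤ) ≤ |(l1 : ℤ) - l2| := Int.one_le_abs (by omega)
    rw [hδ]
    exact_mod_cast this
  have hδ0 : 0 < δ := by linarith
  have hsum : ∑ m ∈ Finset.Ioc A B, gg γ c t a h d (l1 * m) * (starRingEnd ℂ) (gg γ c t a h d (l2 * m)) =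
      ∑ m ∈ Finset.Ioc A B, (if (d : ℤ) ∣ ((l1 * m : ℕ) : ℤ) - a then
        e ((t * ((l1 : ℝ) ^ c - (l2 : ℝ) ^ c)) * (m : ℝ) ^ c - (h * ((l1 : ℝ) ^ γ - (l2 : ℝ) ^ γ)) * (m : ℝ) ^ γ) else 0) := by
    refine Finset.sum_congr rfl fun m _ => ?_
    unfold gg
    have hiff : ((d : ℤ) ∣ ((l1 * m : ℕ) : ℤ) - a) ↔ ((d : ℤ) ∣ ((l2 * m : ℕ) : ℤ) - a) := by
      have h1 : (d : ℤ) ∣ ((l1 * m : ℕ) : ℤ) - ((l2 * m : ℕ) : ℤ) :=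
        Nat.modEq_iff_dvd.1 (hmod.mul_right m).symm
      constructor
      · intro h2
        have := dvd_sub h2 h1
        simpa using this
      · intro h2
        have := dvd_add h2 h1
        simpa using this
    by_cases hq : (d : ℤ) ∣ ((l1 * m : ℕ) : ℤ) - a
    · rw [if_pos hq, if_pos hq, if_pos (hiff.1 hq), e_conj, ← e_add]
      congr 1
      push_cast
      rw [Real.mul_rpow hl1p.le (by positivity), Real.mul_rpow hl1p.le (by positivity),
        Real.mul_rpow hl2p.le (by positivity), Real.mul_rpow hl2p.le (by positivity)]
      ring
    · rw [if_neg hq, if_neg hq]; simp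
  rw [hsum]
  set α := (h : ℝ) * ((l1 : ℝ) ^ γ - (l2 : ℝ) ^ γ) with hα
  set β := t * ((l1 : ℝ) ^ c - (l2 : ℝ) ^ c) with hβ
  have hαl : h * (γ * (2 * l0) ^ (γ - 1) * δ) ≤ |α| := by
    rw [hα, abs_mul, abs_of_pos hh']; gcongr
  have hαu : |α| ≤ h * (l0 ^ (γ - 1) * δ) := by
    rw [hα, abs_mul, abs_of_pos hh']; gcongr
  have hβu : |β| ≤ |t| * (c * (2 * l0) ^ (c - 1) * δ) := by
    rw [hβ, abs_mul]; gcongr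
  have hα0 : 0 < |α| := lt_of_lt_of_le (by positivity) hαl
  set M0 := N / (2 * l0) with hM0
  have hM00 : 0 < M0 := by positivity
  set Y := (|α| * M0 ^ γ) ^ (1 / 3 : ℝ) with hY
  have hY0 : 0 < Y := by positivity
  have hY3 : Y ^ 3 = |α| * M0 ^ γ := by
    rw [hY, ← Real.rpow_natCast, ← Real.rpow_mul (by positivity)]
    norm_num
  have hsq : N ^ (1 / 2 : ℝ) ^ 1 = N ^ (1 / 2 : ℝ) := by norm_num
  set R := N ^ (1 / 2 : ℝ) with hR
  have hR0 : 0 < R := by positivity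
  have hR2 : R ^ 2 = N := by
    rw [hR, ← Real.rpow_natCast, ← Real.rpow_mul hN0.le]; norm_num
  have hl0R : 2 * (l0 : ℝ) ≤ 3 * R := by
    refine (le_abs_self _).trans (abs_le_of_sq_le_sq ?_ (by positivity))
    nlinarith
  have hP : R * N ^ (-θ) / 3 ≤ M0 / d := by
    rw [hM0, div_div, div_le_div_iff₀ (by norm_num) (by positivity)]
    calc R * N ^ (-θ) * (2 * l0 * d) ≤ R * N ^ (-θ) * (3 * R * N ^ θ) := by gcongr
      _ = 3 * R ^ 2 * (N ^ (-θ) * N ^ θ) := by ring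
      _ = N * 3 := by rw [← Real.rpow_add hN0, hR2]; simp; ring
  set P := M0 / d with hPdef
  have hP0 : 0 < P := by positivity
  have hP2 : 4 * N ^ (18 * σ) * (d : ℝ) ^ 2 ≤ P ^ 2 := by
    calc 4 * N ^ (18 * σ) * (d : ℝ) ^ 2 ≤ 4 * N ^ (18 * σ) * (N ^ θ) ^ 2 := by gcongr
      _ = 36 * N ^ (18 * σ + 2 * θ) / 9 := by
          rw [Real.rpow_add hN0, ← Real.rpow_natCast (N ^ θ), ← Real.rpow_mul hN0.le]
          rw [show θ * ((2 : ℕ) : ℝ) = 2 * θ by push_cast; ring]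
          ring
      _ ≤ N ^ (1 - 4 * θ - 18 * σ) * N ^ (18 * σ + 2 * θ) / 9 := by
          gcongr
          linarith
      _ = (R * N ^ (-θ) / 3) ^ 2 := by
          rw [div_pow, mul_pow, hR2, ← Real.rpow_natCast (N ^ (-θ)), ← Real.rpow_mul hN0.le,
            ← Real.rpow_add hN0]
          nth_rewrite 2 [← Real.rpow_one N]
          rw [← Real.rpow_add hN0]
          norm_num
          congr 1; ring
      _ ≤ P ^ 2 := by gcongr
  have hN18 : 1 ≤ N ^ (18 * σ) := Real.one_le_rpow hN1 (by positivity)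
  have hdM : (d : ℝ) ≤ M0 := by
    have hd1 : (1 : ℝ) ≤ d := by exact_mod_cast hd
    have : 1 ≤ P := by
      refine (le_abs_self _).trans (abs_le_of_sq_le_sq ?_ (by positivity))
      have : (1 : ℝ) ≤ d ^ 2 := one_le_pow₀ hd1
      have h7 : 1 * 1 ≤ N ^ (18 * σ) * (d : ℝ) ^ 2 := mul_le_mul hN18 this (by norm_num) (by positivity)
      linarith
    rw [hPdef, one_le_div hd'] at this
    exact this
  have hYl : N ^ (5 * σ) ≤ Y := by
    rw [hY]
    apply le_rpow_third _ _ (by positivity)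
    calc (N ^ (5 * σ)) ^ 3 = N ^ (15 * σ) := by
          rw [← Real.rpow_natCast, ← Real.rpow_mul hN0.le]; congr 1; push_cast; ring
      _ = 4 * N ^ (15 * σ) / 4 := by ring
      _ ≤ N ^ (γ - 1 / 2 - 15 * σ) * N ^ (15 * σ) / 4 := by gcongr; linarith
      _ = N ^ γ / R / 4 := by
          rw [← Real.rpow_add hN0, hR, ← Real.rpow_sub hN0]; congr 2; ring
      _ ≤ γ * N ^ γ / (2 * l0) := by
          rw [div_div, div_le_div_iff₀ (by positivity) (by positivity)]
          have : (97 / 100 : ℝ) * N ^ γ ≤ γ * N ^ γ := by gcongr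
          calc N ^ γ * (2 * l0) ≤ N ^ γ * (3 * R) := by gcongr
            _ ≤ 97 / 100 * N ^ γ * (R * 4) := by
              have : 0 < N ^ γ * R := by positivity
              linarith
            _ ≤ _ := by gcongr
      _ = 1 * (γ * (2 * l0) ^ (γ - 1) * 1) * M0 ^ γ := by
          rw [hM0, Real.div_rpow hN0.le (by positivity), Real.rpow_sub (by positivity), Real.rpow_one]
          field_simp
      _ ≤ h * (γ * (2 * l0) ^ (γ - 1) * δ) * M0 ^ γ := by gcongr
      _ ≤ |α| * M0 ^ γ := by gcongr
  have hYu : Y ≤ P / N ^ (5 * σ) := by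
    rw [hY]
    apply rpow_third_le _ _ (by positivity) (by positivity)
    have e1 : (N ^ (5 * σ)) ^ 3 = N ^ (15 * σ) := by
      rw [← Real.rpow_natCast, ← Real.rpow_mul hN0.le]; congr 1; push_cast; ring
    rw [div_pow, e1, le_div_iff₀ (by positivity)]
    calc |α| * M0 ^ γ * N ^ (15 * σ) ≤ h * (l0 ^ (γ - 1) * δ) * (N / l0) ^ γ * N ^ (15 * σ) := by
          gcongr
          rw [hM0]
          gcongr
          linarith
      _ = h * δ * (N ^ γ / l0) * N ^ (15 * σ) := by
          rw [Real.div_rpow hN0.le hl0'.le, Real.rpow_sub hl0', Real.rpow_one]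
          field_simp
      _ ≤ N ^ σ * (2 * d * N ^ (2 * σ)) * (N ^ (1 : ℝ) / l0) * N ^ (15 * σ) := by
          gcongr
      _ = 4 * (N ^ σ * N ^ (2 * σ) * N ^ (15 * σ)) * d ^ 2 * P := by
          rw [hPdef, hM0, Real.rpow_one]
          field_simp
          norm_num
      _ = 4 * N ^ (18 * σ) * d ^ 2 * P := by
          rw [← Real.rpow_add hN0, ← Real.rpow_add hN0]
          congr 4; ring
      _ ≤ P ^ 2 * P := by gcongr
      _ = P ^ 3 := by ring
  have key := H α β M0 Y A B d
    (fun m => (d : ℤ) ∣ ((l1 * m : ℕ) : ℤ) - a) (abs_pos.1 hα0) hd hdM hY0 hY3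
    (by
      have e2 : (2 * (l0 : ℝ)) ^ (c - 1) = (2 * (l0 : ℝ)) ^ (c - γ) * (2 * (l0 : ℝ)) ^ (γ - 1) := by
        rw [← Real.rpow_add (by positivity)]; congr 1; ring
      have e3 : (2 * (l0 : ℝ)) ^ (c - γ) * (4 * M0) ^ (c - γ) = 4 ^ (c - γ) * (N ^ c / N ^ γ) := by
        rw [← Real.rpow_sub hN0, ← Real.mul_rpow (by positivity) (by positivity),
          ← Real.mul_rpow (by positivity) (by positivity), hM0]
        congr 1; field_simp
      have e4 : (4 : ℝ) ^ (c - γ) ≤ 64 := by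
        calc (4 : ℝ) ^ (c - γ) ≤ 4 ^ (3 : ℝ) :=
            Real.rpow_le_rpow_of_exponent_le (by norm_num) (by linarith)
          _ = 64 := by norm_num
      have e5 : 192 / (κ * γ) ≤ N ^ (γ - 1 / 3) := by
        refine le_trans ?_ hl2
        exact le_mul_of_one_le_right (by positivity) (by linarith)
      rw [Real.rpow_sub hN0, div_le_div_iff₀ (by positivity) (by positivity)] at e5
      calc |β| * (4 * M0) ^ (c - γ) ≤ |t| * (c * (2 * l0) ^ (c - 1) * δ) * (4 * M0) ^ (c - γ) := by gcongr
        _ = (|t| * N ^ c) * c * 4 ^ (c - γ) / N ^ γ * ((2 * l0) ^ (γ - 1) * δ) := by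
          rw [e2]
          calc |t| * (c * ((2 * (l0 : ℝ)) ^ (c - γ) * (2 * (l0 : ℝ)) ^ (γ - 1)) * δ) * (4 * M0) ^ (c - γ)
              = |t| * c * ((2 * (l0 : ℝ)) ^ (c - γ) * (4 * M0) ^ (c - γ)) * ((2 * l0) ^ (γ - 1) * δ) := by ring
            _ = _ := by rw [e3]; ring
        _ ≤ N ^ (1 / 3 : ℝ) * 3 * 64 / N ^ γ * ((2 * l0) ^ (γ - 1) * δ) := by gcongr
        _ ≤ (κ * γ) * ((2 * l0) ^ (γ - 1) * δ) := by
            gcongr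
            rw [div_le_iff₀ (by positivity)]
            linarith
        _ = κ * (1 * (γ * (2 * l0) ^ (γ - 1) * δ)) := by ring
        _ ≤ κ * (h * (γ * (2 * l0) ^ (γ - 1) * δ)) := by gcongr
        _ ≤ κ * |α| := by gcongr)
    (by
      intro m hm
      have h3 := hAB m hm
      push_cast at h3
      have hm0 : (0 : ℝ) ≤ m := by positivity
      rw [hM0]
      constructor
      · rw [div_le_iff₀ (by positivity)]
        have := mul_le_mul_of_nonneg_right hl1R' hm0
        linarith [h3.1]
      · rw [show 4 * (N / (2 * (l0 : ℝ))) = 2 * N / l0 by field_simp; norm_num, le_div_iff₀ hl0']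
        have := mul_le_mul_of_nonneg_right hl1R hm0
        linarith [h3.2])
    (fun k0 k hk => p_cond d l1 a hda k0 k hk)
  have hb := absorb C (1 + Real.log N) P Y (N ^ (5 * σ)) (N ^ (-(2 * σ))) (by positivity) hP0
    (by positivity) hYl hYu
    (by
      have : N ^ (5 * σ) * (N ^ (-(2 * σ))) ^ 2 = N ^ σ := by
        rw [← Real.rpow_natCast, ← Real.rpow_mul hN0.le, ← Real.rpow_add hN0]
        congr 1; push_cast; ring
      rw [this]
      linarith)
  have hlog2 : Real.log M0 ≤ Real.log N :=
    Real.log_le_log (by positivity) (div_le_self hN0.le (by linarith))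
  have hfin := key.trans (le_trans (by gcongr) hb)
  have := abs_le_of_sq_le_sq hfin (by positivity)
  rwa [abs_of_nonneg (norm_nonneg _)] at this


lemma cauchy_bil (T s : Finset ℕ) (x y : ℕ → ℂ) (z : ℕ → ℕ → ℂ) (X0 Y0 : ℝ) (hX : 0 ≤ X0)
    (hx : ∀ l ∈ s, ‖x l‖ ≤ X0) (hy : ∀ m ∈ T, ‖y m‖ ≤ Y0) :
    ‖∑ m ∈ T, y m * ∑ l ∈ s, x l * z l m‖ ^ 2 ≤
      T.card * Y0 ^ 2 * (X0 ^ 2 *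
        ∑ l1 ∈ s, ∑ l2 ∈ s, ‖∑ m ∈ T, z l1 m * (starRingEnd ℂ) (z l2 m)‖) := by
  set F : ℕ → ℂ := fun m => ∑ l ∈ s, x l * z l m with hF
  have h1 : ‖∑ m ∈ T, y m * F m‖ ^ 2 ≤ (∑ m ∈ T, ‖y m‖ ^ 2) * ∑ m ∈ T, ‖F m‖ ^ 2 := by
    refine le_trans ?_ (Finset.sum_mul_sq_le_sq_mul_sq T (fun m => ‖y m‖) (fun m => ‖F m‖))
    refine pow_le_pow_left₀ (norm_nonneg _) ?_ 2
    refine (norm_sum_le _ _).trans (le_of_eq ?_)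
    exact Finset.sum_congr rfl fun m _ => norm_mul _ _
  have h2 : ∑ m ∈ T, ‖y m‖ ^ 2 ≤ T.card * Y0 ^ 2 := by
    rw [← nsmul_eq_mul]
    exact Finset.sum_le_card_nsmul _ _ _ fun m hm => pow_le_pow_left₀ (norm_nonneg _) (hy m hm) 2
  have h3 : ((∑ m ∈ T, ‖F m‖ ^ 2 : ℝ) : ℂ) = ∑ l1 ∈ s, ∑ l2 ∈ s, (x l1 * (starRingEnd ℂ) (x l2)) *
      ∑ m ∈ T, z l1 m * (starRingEnd ℂ) (z l2 m) := by
    rw [Complex.ofReal_sum]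
    calc ∑ m ∈ T, ((‖F m‖ ^ 2 : ℝ) : ℂ) = ∑ m ∈ T, ∑ l1 ∈ s, ∑ l2 ∈ s,
          (x l1 * z l1 m) * (starRingEnd ℂ) (x l2 * z l2 m) :=
          Finset.sum_congr rfl fun m _ => normSq_sum_eq s _
      _ = ∑ l1 ∈ s, ∑ l2 ∈ s, ∑ m ∈ T, (x l1 * z l1 m) * (starRingEnd ℂ) (x l2 * z l2 m) := by
          rw [Finset.sum_comm]
          refine Finset.sum_congr rfl fun l1 _ => ?_
          rw [Finset.sum_comm]
      _ = _ := by
          refine Finset.sum_congr rfl fun l1 _ => Finset.sum_congr rfl fun l2 _ => ?_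
          rw [Finset.mul_sum]
          refine Finset.sum_congr rfl fun m _ => ?_
          rw [map_mul]; ring
  have h4 : ∑ m ∈ T, ‖F m‖ ^ 2 ≤ X0 ^ 2 *
        ∑ l1 ∈ s, ∑ l2 ∈ s, ‖∑ m ∈ T, z l1 m * (starRingEnd ℂ) (z l2 m)‖ := by
    have h5 : ∑ m ∈ T, ‖F m‖ ^ 2 = ‖((∑ m ∈ T, ‖F m‖ ^ 2 : ℝ) : ℂ)‖ := by
      rw [Complex.norm_real, Real.norm_of_nonneg]
      positivity
    rw [h5, h3, Finset.mul_sum]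
    refine (norm_sum_le _ _).trans (Finset.sum_le_sum fun l1 h1 => ?_)
    rw [Finset.mul_sum]
    refine (norm_sum_le _ _).trans (Finset.sum_le_sum fun l2 h2 => ?_)
    rw [norm_mul, norm_mul, RCLike.norm_conj, pow_two]
    gcongr
    · exact hx l1 h1
    · exact hx l2 h2
  refine h1.trans ?_
  gcongr

lemma card_cong (s : Finset ℕ) (l0 d Q l1 : ℕ) (hd : 0 < d)
    (hs : ∀ l ∈ s, l0 ≤ l ∧ l < l0 + d * Q) : (s.filter (fun l => l1 ≡ l [MOD d])).card ≤ Q := by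
  have : (s.filter (fun l => l1 ≡ l [MOD d])).card ≤ (Finset.range Q).card := by
    refine Finset.card_le_card_of_injOn (fun l => (l - l0) / d) ?_ ?_
    · intro l hl
      have hl := Finset.mem_filter.1 (Finset.mem_coe.1 hl)
      have := hs l hl.1
      have h2 : (l - l0) / d < Q := by
        rw [Nat.div_lt_iff_lt_mul hd, mul_comm]; omega
      simpa using h2
    · intro a ha b hb hab
      have ha := Finset.mem_filter.1 (Finset.mem_coe.1 ha)
      have hb := Finset.mem_filter.1 (Finset.mem_coe.1 hb)
      have ha1 := hs a ha.1
      have hb1 := hs b hb.1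
      have h1 : a ≡ b [MOD d] := ha.2.symm.trans hb.2
      have h2 : (a - l0) ≡ (b - l0) [MOD d] := by
        have : (a - l0) + l0 ≡ (b - l0) + l0 [MOD d] := by
          rw [Nat.sub_add_cancel ha1.1, Nat.sub_add_cancel hb1.1]; exact h1
        exact Nat.ModEq.add_right_cancel' l0 this
      simp only at hab
      have h3 := Nat.div_add_mod (a - l0) d
      have h4 := Nat.div_add_mod (b - l0) d
      rw [hab] at h3
      have h5 : (a - l0) % d = (b - l0) % d := h2
      rw [h5] at h3
      omega
  simpa using this

lemma gg_norm_le (γ c t : ℝ) (a : ℤ) (h d n : ℕ) : ‖gg γ c t a h d n‖ ≤ 1 := by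
  unfold gg
  split_ifs
  · rw [norm_e]
  · simp

lemma gg_corr_zero (γ c t : ℝ) (a : ℤ) (h d l1 l2 m : ℕ) (hda : Int.gcd d a = 1)
    (hne : ¬ l1 ≡ l2 [MOD d]) :
    gg γ c t a h d (l1 * m) * (starRingEnd ℂ) (gg γ c t a h d (l2 * m)) = 0 := by
  unfold gg
  by_cases h1 : (d : ℤ) ∣ ((l1 * m : ℕ) : ℤ) - a
  · by_cases h2 : (d : ℤ) ∣ ((l2 * m : ℕ) : ℤ) - a
    · exfalso
      apply hne
      rw [mul_comm] at h1 h2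
      exact ((p_cond d m a hda l2 l1 h2).1 h1)
    · rw [if_neg h2]; simp
  · rw [if_neg h1]; simp

lemma sum_ioc_ind (A B M : ℕ) (hB : B ≤ M) (f : ℕ → ℂ) :
    ∑ m ∈ Finset.Ioc 0 M, (if m ∈ Finset.Ioc A B then f m else 0) = ∑ m ∈ Finset.Ioc A B, f m := by
  rw [← Finset.sum_filter]
  congr 1
  ext m
  simp only [Finset.mem_filter, Finset.mem_Ioc]
  omega

lemma block (γ c σ θ : ℝ) (hγ0 : 97 / 100 < γ) (hγ1 : γ < 1) (hc1 : 1 < c) (hc3 : c < 3)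
    (hσ : 0 < σ) (hσ1 : σ ≤ 1 / 40) (hθσ : θ + 8 * σ ≤ 1 / 5) :
    ∃ N0 : ℝ, 2 ≤ N0 ∧ ∀ N : ℝ, N0 ≤ N → ∀ (t : ℝ) (a : ℤ) (h d : ℕ),
      |t| * N ^ c ≤ N ^ (1 / 3 : ℝ) → 0 < h → (h : ℝ) ≤ N ^ σ → 0 < d → (d : ℝ) ≤ N ^ θ →
      Int.gcd d a = 1 → ∀ (n0 n1 : ℕ), (∀ n ∈ Finset.Ioc n0 n1, N ≤ (n : ℝ)) → (n1 : ℝ) ≤ 2 * N →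
      ∀ (s : Finset ℕ) (k Q : ℕ) (x y : ℕ → ℂ) (X0 Y0 : ℝ), 0 ≤ X0 → 0 ≤ Y0 → 0 < k →
      N ^ (2 * σ) ≤ (Q : ℝ) → (Q : ℝ) ≤ 2 * N ^ (2 * σ) →
      (∀ l ∈ s, k * (d * Q) ≤ l ∧ l < k * (d * Q) + d * Q ∧ (l : ℝ) ^ 2 ≤ 2 * N) →
      (∀ l, ‖x l‖ ≤ X0) → (∀ m, ‖y m‖ ≤ Y0) →
      ‖∑ l ∈ s, ∑ m ∈ Finset.Ioc (n0 / l) (n1 / l), x l * y m * gg γ c t a h d (l * m)‖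
        ≤ 3 * X0 * Y0 * N ^ (1 - σ) / d * (1 / k) := by
  obtain ⟨N1, h11, h12⟩ := corr γ c σ θ hγ0 hγ1 hc1 hc3 hσ hσ1 hθσ
  obtain ⟨N2, h21, h22⟩ := ev_log 2 (1 - 2 * θ) (by linarith)
  refine ⟨max 2 (max N1 N2), le_max_left _ _, ?_⟩
  intro N hN t a h d ht hh hhN hd hdN hda n0 n1 hn0 hn1 s k Q x y X0 Y0 hX0 hY0 hk hQ1 hQ2 hs hx hy
  have hN2 : 2 ≤ N := le_trans (le_max_left _ _) hN
  have hN0 : 0 < N := by linarith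
  have hcorr := h12 N (le_trans (le_trans (le_max_left _ _) (le_max_right _ _)) hN) t a h d
  have hl2 := h22 N (le_trans (le_trans (le_max_right _ _) (le_max_right _ _)) hN)
  have hlogN := Real.log_nonneg (show 1 ≤ N by linarith)
  have hd' : (0 : ℝ) < d := by exact_mod_cast hd
  have hk' : (0 : ℝ) < k := by exact_mod_cast hk
  rcases s.eq_empty_or_nonempty with rfl | hne
  · simp; positivity
  have hQ' : (0 : ℝ) < Q := lt_of_lt_of_le (by positivity) hQ1
  have hQ0 : 0 < Q := by exact_mod_cast hQ'
  set l0 := k * (d * Q) with hl0def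
  have hl0 : 0 < l0 := by positivity
  have hl0' : (0 : ℝ) < l0 := by exact_mod_cast hl0
  have hBl : d * Q ≤ l0 := Nat.le_mul_of_pos_left _ hk
  have hl0N : (l0 : ℝ) ^ 2 ≤ 2 * N := by
    obtain ⟨l, hl⟩ := hne
    have h1 := hs l hl
    have h2 : (l0 : ℝ) ≤ l := by exact_mod_cast h1.1
    exact (pow_le_pow_left₀ hl0'.le h2 2).trans h1.2.2
  have hnd : 1 ≤ N / (l0 * d) := by
    rw [one_le_div (by positivity)]
    refine (le_abs_self _).trans (abs_le_of_sq_le_sq ?_ hN0.le)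
    calc ((l0 : ℝ) * d) ^ 2 = (l0 : ℝ) ^ 2 * d ^ 2 := by ring
      _ ≤ 2 * N * (N ^ θ) ^ 2 := by gcongr
      _ ≤ N ^ (1 - 2 * θ) * N * (N ^ θ) ^ 2 := by gcongr; linarith
      _ = N ^ 2 := by
        rw [Real.rpow_sub hN0, ← Real.rpow_natCast (N ^ θ), ← Real.rpow_mul hN0.le, Real.rpow_one,
          show θ * ((2 : ℕ) : ℝ) = 2 * θ by push_cast; ring]
        field_simp
  set z : ℕ → ℕ → ℂ := fun l m => if m ∈ Finset.Ioc (n0 / l) (n1 / l) then gg γ c t a h d (l * m) else 0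
    with hz
  set M := n1 / l0 with hM
  have hMl : ∀ l ∈ s, n1 / l ≤ M := fun l hl => Nat.div_le_div_left (hs l hl).1 hl0
  have hMR : (M : ℝ) ≤ 2 * N / l0 := by
    calc (M : ℝ) ≤ (n1 : ℝ) / l0 := Nat.cast_div_le
      _ ≤ _ := by gcongr
  have hS : ∑ l ∈ s, ∑ m ∈ Finset.Ioc (n0 / l) (n1 / l), x l * y m * gg γ c t a h d (l * m) =
      ∑ m ∈ Finset.Ioc 0 M, y m * ∑ l ∈ s, x l * z l m := by
    simp_rw [Finset.mul_sum]
    rw [Finset.sum_comm]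
    refine Finset.sum_congr rfl fun l hl => ?_
    rw [← sum_ioc_ind _ _ M (hMl l hl)]
    refine Finset.sum_congr rfl fun m _ => ?_
    simp only [hz]
    split_ifs
    · ring
    · simp
  have hcb := cauchy_bil (Finset.Ioc 0 M) s x y z X0 Y0 hX0 (fun l _ => hx l) (fun m _ => hy m)
  rw [hS]
  -- bound each correlation
  have hco : ∀ l1 ∈ s, ∀ l2 ∈ s, ‖∑ m ∈ Finset.Ioc 0 M, z l1 m * (starRingEnd ℂ) (z l2 m)‖ ≤
      (if l1 = l2 then 3 * (N / (l0 * d)) else 0) +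
      (if l1 ≡ l2 [MOD d] then N / (2 * l0) / d * N ^ (-(2 * σ)) else 0) := by
    intro l1 hs1 l2 hs2
    have q1 := hs l1 hs1
    have q2 := hs l2 hs2
    have hl1pos : 0 < l1 := by omega
    have hl2pos : 0 < l2 := by omega
    have hrew : ∑ m ∈ Finset.Ioc 0 M, z l1 m * (starRingEnd ℂ) (z l2 m) =
        ∑ m ∈ Finset.Ioc (max (n0 / l1) (n0 / l2)) (min (n1 / l1) (n1 / l2)),
          gg γ c t a h d (l1 * m) * (starRingEnd ℂ) (gg γ c t a h d (l2 * m)) := by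
      rw [← sum_ioc_ind _ _ M (le_trans (min_le_left _ _) (hMl l1 hs1))]
      refine Finset.sum_congr rfl fun m _ => ?_
      simp only [hz, Finset.mem_Ioc, max_lt_iff, le_min_iff]
      by_cases c1 : n0 / l1 < m ∧ m ≤ n1 / l1
      · by_cases c2 : n0 / l2 < m ∧ m ≤ n1 / l2
        · rw [if_pos c1, if_pos c2, if_pos ⟨⟨c1.1, c2.1⟩, c1.2, c2.2⟩]
        · have c4 : ¬ ((n0 / l1 < m ∧ n0 / l2 < m) ∧ m ≤ n1 / l1 ∧ m ≤ n1 / l2) := by tauto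
          rw [if_neg c2, if_neg c4]; simp
      · have c4 : ¬ ((n0 / l1 < m ∧ n0 / l2 < m) ∧ m ≤ n1 / l1 ∧ m ≤ n1 / l2) := by tauto
        rw [if_neg c1, if_neg c4]; simp
    rw [hrew]
    by_cases hmod : l1 ≡ l2 [MOD d]
    · rw [if_pos hmod]
      by_cases heq : l1 = l2
      · subst heq
        rw [if_pos rfl, max_self, min_self]
        have hE : 0 ≤ N / (2 * l0) / d * N ^ (-(2 * σ)) := by positivity
        have hzz : ∀ m ∈ Finset.Ioc (n0 / l1) (n1 / l1), gg γ c t a h d (l1 * m) * (starRingEnd ℂ) (gg γ c t a h d (l1 * m))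
            = if (d : ℤ) ∣ ((l1 * m : ℕ) : ℤ) - a then (gg γ c t a h d (l1 * m) * (starRingEnd ℂ) (gg γ c t a h d (l1 * m))) else 0 := by
          intro m _
          split_ifs with hq
          · rfl
          · unfold gg; rw [if_neg hq]; simp
        rw [Finset.sum_congr rfl hzz]
        have hcount := ap_count (n0 / l1) (n1 / l1) d hd (fun m => (d : ℤ) ∣ ((l1 * m : ℕ) : ℤ) - a)
          (fun k0 k hk => p_cond d l1 a hda k0 k hk)
          (fun m => gg γ c t a h d (l1 * m) * (starRingEnd ℂ) (gg γ c t a h d (l1 * m))) 1 (by norm_num)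
          (fun m _ _ => by
            rw [norm_mul, RCLike.norm_conj]
            exact mul_le_one₀ (gg_norm_le _ _ _ _ _ _ _) (norm_nonneg _) (gg_norm_le _ _ _ _ _ _ _))
          (2 * N / l0)
          (by
            have : ((n1 / l1 : ℕ) : ℝ) ≤ M := by exact_mod_cast hMl l1 hs1
            have h0 : (0 : ℝ) ≤ ((n0 / l1 : ℕ) : ℝ) := by positivity
            linarith) (by positivity)
        refine hcount.trans ?_
        have : 2 * N / l0 / d = 2 * (N / (l0 * d)) := by field_simp
        rw [this]
        linarith
      · rw [if_neg heq, zero_add]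
        refine hcorr l0 l1 l2 ht hh hhN hd hdN hda hl0 hl0N q1.1 (by omega) q2.1 (by omega) heq hmod ?_ _ _ ?_
        · have e1 : |(l1 : ℝ) - l2| ≤ d * Q := by
            have w1 : (l1 : ℝ) < l0 + d * Q := by exact_mod_cast q1.2.1
            have w2 : (l2 : ℝ) < l0 + d * Q := by exact_mod_cast q2.2.1
            have w3 : (l0 : ℝ) ≤ l1 := by exact_mod_cast q1.1
            have w4 : (l0 : ℝ) ≤ l2 := by exact_mod_cast q2.1
            exact abs_le.2 ⟨by linarith, by linarith⟩
          refine e1.trans ?_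
          calc (d : ℝ) * Q ≤ d * (2 * N ^ (2 * σ)) := by gcongr
            _ = _ := by ring
        · intro m hm
          rw [Finset.mem_Ioc, max_lt_iff, le_min_iff] at hm
          have w1 : n0 < l1 * m := by
            have := (Nat.div_lt_iff_lt_mul hl1pos).1 hm.1.1
            rwa [mul_comm] at this
          have w2 : l1 * m ≤ n1 := by
            have := (Nat.le_div_iff_mul_le hl1pos).1 hm.2.1
            rwa [mul_comm] at this
          refine ⟨hn0 _ (Finset.mem_Ioc.2 ⟨w1, w2⟩), le_trans ?_ hn1⟩
          exact_mod_cast w2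
    · rw [if_neg hmod, if_neg (fun hq => hmod (by rw [hq]))]
      rw [Finset.sum_eq_zero (fun m _ => gg_corr_zero γ c t a h d l1 l2 m hda hmod)]
      simp
  have hcards : (s.card : ℝ) ≤ d * Q := by
    have : s ⊆ Finset.Ico l0 (l0 + d * Q) := by
      intro l hl
      have := hs l hl
      rw [Finset.mem_Ico]; omega
    have := Finset.card_le_card this
    rw [Nat.card_Ico] at this
    have h2 : s.card ≤ d * Q := by omega
    exact_mod_cast h2
  have htot : ∑ l1 ∈ s, ∑ l2 ∈ s, ‖∑ m ∈ Finset.Ioc 0 M, z l1 m * (starRingEnd ℂ) (z l2 m)‖ ≤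
      d * Q * (4 * (N / (l0 * d))) := by
    calc _ ≤ ∑ l1 ∈ s, ∑ l2 ∈ s, ((if l1 = l2 then 3 * (N / (l0 * d)) else 0) +
        (if l1 ≡ l2 [MOD d] then N / (2 * l0) / d * N ^ (-(2 * σ)) else 0)) :=
          Finset.sum_le_sum fun l1 h1 => Finset.sum_le_sum fun l2 h2 => hco l1 h1 l2 h2
      _ ≤ ∑ l1 ∈ s, (4 * (N / (l0 * d))) := by
          refine Finset.sum_le_sum fun l1 h1 => ?_
          rw [Finset.sum_add_distrib, Finset.sum_ite_eq, if_pos h1, ← Finset.sum_filter, Finset.sum_const,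
            nsmul_eq_mul]
          have hcd : ((s.filter (fun l => l1 ≡ l [MOD d])).card : ℝ) ≤ 2 * N ^ (2 * σ) := by
            refine le_trans ?_ hQ2
            exact_mod_cast card_cong s l0 d Q l1 hd (fun l hl => ⟨(hs l hl).1, (hs l hl).2.1⟩)
          have : ((s.filter (fun l => l1 ≡ l [MOD d])).card : ℝ) * (N / (2 * l0) / d * N ^ (-(2 * σ))) ≤
              N / (l0 * d) := by
            calc _ ≤ 2 * N ^ (2 * σ) * (N / (2 * l0) / d * N ^ (-(2 * σ))) := by gcongr
              _ = _ := by
                rw [Real.rpow_neg hN0.le]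
                field_simp
          linarith
      _ = s.card * (4 * (N / (l0 * d))) := by rw [Finset.sum_const, nsmul_eq_mul]
      _ ≤ _ := by gcongr
  have hfin : ‖∑ m ∈ Finset.Ioc 0 M, y m * ∑ l ∈ s, x l * z l m‖ ^ 2 ≤
      (3 * X0 * Y0 * N ^ (1 - σ) / d * (1 / k)) ^ 2 := by
    refine hcb.trans ?_
    rw [Nat.card_Ioc, Nat.sub_zero]
    calc (M : ℝ) * Y0 ^ 2 * (X0 ^ 2 * ∑ l1 ∈ s, ∑ l2 ∈ s, ‖∑ m ∈ Finset.Ioc 0 M, z l1 m * (starRingEnd ℂ) (z l2 m)‖)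
        ≤ (2 * N / l0) * Y0 ^ 2 * (X0 ^ 2 * (d * Q * (4 * (N / (l0 * d))))) := by gcongr
      _ = 8 * X0 ^ 2 * Y0 ^ 2 * N ^ 2 / (d ^ 2 * k ^ 2 * Q) := by
          rw [hl0def]
          push_cast
          field_simp
          ring
      _ ≤ 9 * X0 ^ 2 * Y0 ^ 2 * N ^ 2 / (d ^ 2 * k ^ 2 * N ^ (2 * σ)) := by
          gcongr
          norm_num
      _ = _ := by
          rw [Real.rpow_sub hN0, Real.rpow_one, show 2 * σ = σ * (2 : ℕ) by push_cast; ring,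
            Real.rpow_mul hN0.le, Real.rpow_natCast]
          field_simp
          ring
  have := abs_le_of_sq_le_sq hfin (by positivity)
  rwa [abs_of_nonneg (norm_nonneg _)] at this


lemma typeII (γ c σ θ : ℝ) (hγ0 : 97 / 100 < γ) (hγ1 : γ < 1) (hc1 : 1 < c) (hc3 : c < 3)
    (hσ : 0 < σ) (hσ1 : σ ≤ 1 / 40) (hθσ : θ + 8 * σ ≤ 1 / 5) :
    ∃ N0 : ℝ, 2 ≤ N0 ∧ ∀ N : ℝ, N0 ≤ N → ∀ (t : ℝ) (a : ℤ) (h d : ℕ),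
      |t| * N ^ c ≤ N ^ (1 / 3 : ℝ) → 0 < h → (h : ℝ) ≤ N ^ σ → 0 < d → (d : ℝ) ≤ N ^ θ →
      Int.gcd d a = 1 → ∀ (n0 n1 : ℕ), (∀ n ∈ Finset.Ioc n0 n1, N ≤ (n : ℝ)) → (n1 : ℝ) ≤ 2 * N →
      ∀ (V W : ℕ) (x y : ℕ → ℂ) (X0 Y0 : ℝ), 0 ≤ X0 → 0 ≤ Y0 →
      2 * N ^ (θ + 2 * σ) ≤ (V : ℝ) + 1 → (W : ℝ) ^ 2 ≤ 2 * N →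
      (∀ l, ‖x l‖ ≤ X0) → (∀ m, ‖y m‖ ≤ Y0) →
      ‖∑ l ∈ Finset.Ioc V W, ∑ m ∈ Finset.Ioc (n0 / l) (n1 / l), x l * y m * gg γ c t a h d (l * m)‖
        ≤ 3 * X0 * Y0 * N ^ (1 - σ) / d * (1 + Real.log N) := by
  obtain ⟨N1, h11, h12⟩ := block γ c σ θ hγ0 hγ1 hc1 hc3 hσ hσ1 hθσ
  refine ⟨N1, h11, ?_⟩
  intro N hN t a h d ht hh hhN hd hdN hda n0 n1 hn0 hn1 V W x y X0 Y0 hX0 hY0 hV hW hx hy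
  have hN2 : 2 ≤ N := h11.trans hN
  have hN0 : 0 < N := by linarith
  have hB := h12 N hN t a h d ht hh hhN hd hdN hda n0 n1 hn0 hn1
  have hd' : (0 : ℝ) < d := by exact_mod_cast hd
  set Q := ⌈N ^ (2 * σ)⌉₊ with hQ
  have hQ1 : N ^ (2 * σ) ≤ (Q : ℝ) := Nat.le_ceil _
  have h1 : 1 ≤ N ^ (2 * σ) := Real.one_le_rpow (by linarith) (by positivity)
  have hQ2 : (Q : ℝ) ≤ 2 * N ^ (2 * σ) := by
    have := Nat.ceil_lt_add_one (show 0 ≤ N ^ (2 * σ) by positivity)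
    rw [← hQ] at this
    linarith
  have hQ0 : 0 < Q := Nat.ceil_pos.2 (by linarith)
  have hdQ : d * Q ≤ V + 1 := by
    have : (d : ℝ) * Q ≤ V + 1 := by
      calc (d : ℝ) * Q ≤ N ^ θ * (2 * N ^ (2 * σ)) := by gcongr
        _ = 2 * N ^ (θ + 2 * σ) := by rw [Real.rpow_add hN0]; ring
        _ ≤ _ := hV
    exact_mod_cast this
  have hdQ0 : 0 < d * Q := by positivity
  rw [← Finset.sum_fiberwise_of_maps_to (s := Finset.Ioc V W) (t := Finset.Ico 1 (W + 1))
    (g := fun l => l / (d * Q)) (by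
      intro l hl
      rw [Finset.mem_Ioc] at hl
      rw [Finset.mem_Ico]
      refine ⟨(Nat.one_le_div_iff hdQ0).2 (by omega), ?_⟩
      have := Nat.div_le_self l (d * Q)
      omega)]
  calc _ ≤ ∑ k ∈ Finset.Ico 1 (W + 1), 3 * X0 * Y0 * N ^ (1 - σ) / d * (1 / k) := by
        refine (norm_sum_le _ _).trans (Finset.sum_le_sum fun k hk => ?_)
        rw [Finset.mem_Ico] at hk
        refine hB _ k Q x y X0 Y0 hX0 hY0 (by omega) hQ1 hQ2 ?_ hx hy
        intro l hl
        rw [Finset.mem_filter, Finset.mem_Ioc] at hl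
        have e1 := Nat.div_add_mod l (d * Q)
        have e2 := Nat.mod_lt l hdQ0
        rw [hl.2, mul_comm] at e1
        refine ⟨by omega, by omega, ?_⟩
        have : (l : ℝ) ≤ W := by exact_mod_cast hl.1.2
        exact (pow_le_pow_left₀ (by positivity) this 2).trans hW
    _ = 3 * X0 * Y0 * N ^ (1 - σ) / d * ∑ k ∈ Finset.Ico 1 (W + 1), 1 / (k : ℝ) := by
        rw [Finset.mul_sum]
    _ ≤ _ := by
        gcongr
        refine sum_inv_le (W + 1) N (by linarith) ?_
        push_cast
        have : (W : ℝ) ≤ N := by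
          refine (le_abs_self _).trans (abs_le_of_sq_le_sq ?_ hN0.le)
          nlinarith
        linarith


lemma tau_bound (ε : ℝ) (hε : 0 < ε) :
    ∃ C : ℝ, 1 ≤ C ∧ ∀ n : ℕ, n ≠ 0 → (n.divisors.card : ℝ) ≤ C * (n : ℝ) ^ ε := by
  set T := ⌈(2 : ℝ) ^ (1 / ε)⌉₊ with hT
  have hlog2 : 0 < Real.log 2 := Real.log_pos (by norm_num)
  set K := 1 + 1 / (ε * Real.log 2) with hK
  have hK1 : 1 ≤ K := by
    have : 0 < 1 / (ε * Real.log 2) := by positivity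
    linarith
  refine ⟨K ^ T, one_le_pow₀ hK1, ?_⟩
  intro n hn
  have hfac : ∀ p ∈ n.primeFactors, ((n.factorization p : ℝ) + 1) ≤
      (if p < T then K else 1) * ((p : ℝ) ^ (n.factorization p)) ^ ε := by
    intro p hp
    have hpp := Nat.prime_of_mem_primeFactors hp
    have hp2 : (2 : ℝ) ≤ p := by exact_mod_cast hpp.two_le
    set k := n.factorization p with hk
    have e1 : ((p : ℝ) ^ k) ^ ε = ((p : ℝ) ^ ε) ^ k := by
      rw [← Real.rpow_natCast, ← Real.rpow_natCast, ← Real.rpow_mul (by positivity),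
        ← Real.rpow_mul (by positivity), mul_comm]
    rw [e1]
    split_ifs with h
    · have h1 : 1 + ε * Real.log 2 ≤ (p : ℝ) ^ ε := by
        calc 1 + ε * Real.log 2 ≤ Real.exp (ε * Real.log 2) := by
              linarith [Real.add_one_le_exp (ε * Real.log 2)]
          _ = 2 ^ ε := by rw [Real.rpow_def_of_pos (by norm_num)]; congr 1; ring
          _ ≤ _ := Real.rpow_le_rpow (by norm_num) hp2 hε.le
      have h2 : 1 + (k : ℝ) * (ε * Real.log 2) ≤ ((p : ℝ) ^ ε) ^ k := by
        refine le_trans (one_add_mul_le_pow (by have : 0 < ε * Real.log 2 := by positivity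
                                                linarith) k) ?_
        gcongr
      calc (k : ℝ) + 1 ≤ K * (1 + (k : ℝ) * (ε * Real.log 2)) := by
            rw [hK]
            have e2 : (1 + 1 / (ε * Real.log 2)) * (1 + (k : ℝ) * (ε * Real.log 2)) =
              1 + k + (k * (ε * Real.log 2) + 1 / (ε * Real.log 2)) := by
              field_simp
              ring
            rw [e2]
            have : 0 ≤ k * (ε * Real.log 2) + 1 / (ε * Real.log 2) := by positivity
            linarith
        _ ≤ _ := by gcongr
    · have h1 : (2 : ℝ) ^ (1 / ε) ≤ p := by
        refine (Nat.le_ceil _).trans ?_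
        exact_mod_cast (not_lt.1 h)
      have h2 : (2 : ℝ) ≤ (p : ℝ) ^ ε := by
        calc (2 : ℝ) = (2 ^ (1 / ε)) ^ ε := by
              rw [← Real.rpow_mul (by norm_num)]; field_simp; simp
          _ ≤ _ := Real.rpow_le_rpow (by positivity) h1 hε.le
      rw [one_mul]
      calc (k : ℝ) + 1 ≤ 2 ^ k := by
            have : k + 1 ≤ 2 ^ k := Nat.lt_two_pow_self
            exact_mod_cast this
        _ ≤ _ := by gcongr
  rw [Nat.card_divisors hn]
  push_cast
  calc ∏ p ∈ n.primeFactors, ((n.factorization p : ℝ) + 1)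
      ≤ ∏ p ∈ n.primeFactors, ((if p < T then K else 1) * ((p : ℝ) ^ (n.factorization p)) ^ ε) :=
        Finset.prod_le_prod (fun p _ => by positivity) hfac
    _ = (∏ p ∈ n.primeFactors, (if p < T then K else 1)) * (n : ℝ) ^ ε := by
        rw [Finset.prod_mul_distrib, Real.finsetProd_rpow _ _ (fun p _ => by positivity)]
        congr 2
        conv_rhs => rw [← Nat.prod_factorization_pow_eq_self hn]
        rw [Finsupp.prod]
        push_cast
        rfl
    _ ≤ K ^ T * (n : ℝ) ^ ε := by
        gcongr
        rw [← Finset.prod_filter, Finset.prod_const]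
        apply pow_le_pow_right₀ hK1
        have : n.primeFactors.filter (fun p => p < T) ⊆ Finset.range T := by
          intro p hp
          exact Finset.mem_range.2 (Finset.mem_filter.1 hp).2
        simpa using Finset.card_le_card this

lemma abel_log (A : ℕ) (g : ℕ → ℂ) (E : ℝ) (B : ℕ) (hAB : A ≤ B)
    (hE : ∀ B', A ≤ B' → B' ≤ B → ‖∑ k ∈ Finset.Ioc A B', g k‖ ≤ E) :
    ‖∑ k ∈ Finset.Ioc A B, (Real.log k : ℂ) * g k‖ ≤ 2 * Real.log B * E := by
  have hE0 : 0 ≤ E := (norm_nonneg _).trans (hE A le_rfl hAB)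
  have key : ∀ B', A ≤ B' → B' ≤ B →
      ‖(∑ k ∈ Finset.Ioc A B', (Real.log k : ℂ) * g k) - (Real.log B' : ℂ) * ∑ k ∈ Finset.Ioc A B', g k‖
        ≤ E * (Real.log B' - Real.log A) := by
    intro B' h1
    induction B', h1 using Nat.le_induction with
    | base => intro _; simp
    | succ n hn ih =>
      intro h2
      have ih := ih (by omega)
      rw [Finset.sum_Ioc_succ_top hn, Finset.sum_Ioc_succ_top hn]
      have e1 : (∑ k ∈ Finset.Ioc A n, (Real.log k : ℂ) * g k) + (Real.log ((n + 1 : ℕ) : ℝ) : ℂ) * g (n + 1) -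
          (Real.log ((n + 1 : ℕ) : ℝ) : ℂ) * ((∑ k ∈ Finset.Ioc A n, g k) + g (n + 1)) =
          ((∑ k ∈ Finset.Ioc A n, (Real.log k : ℂ) * g k) - (Real.log n : ℂ) * ∑ k ∈ Finset.Ioc A n, g k) -
          ((Real.log ((n + 1 : ℕ) : ℝ) - Real.log n : ℝ) : ℂ) * ∑ k ∈ Finset.Ioc A n, g k := by
        push_cast; ring
      rw [e1]
      refine (norm_sub_le _ _).trans ?_
      have hmono : 0 ≤ Real.log ((n + 1 : ℕ) : ℝ) - Real.log n := by
        rcases Nat.eq_zero_or_pos n with h | h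
        · subst h; simp
        · have : Real.log n ≤ Real.log ((n + 1 : ℕ) : ℝ) :=
            Real.log_le_log (by exact_mod_cast h) (by push_cast; linarith)
          linarith
      rw [norm_mul, Complex.norm_real, Real.norm_of_nonneg hmono]
      have := mul_le_mul_of_nonneg_left (hE n hn (by omega)) hmono
      linarith
  have h1 := key B hAB le_rfl
  have h2 := hE B hAB le_rfl
  have hB : 0 ≤ Real.log B := Real.log_natCast_nonneg B
  have hA : 0 ≤ Real.log A := Real.log_natCast_nonneg A
  calc _ = ‖((∑ k ∈ Finset.Ioc A B, (Real.log k : ℂ) * g k) - (Real.log B : ℂ) * ∑ k ∈ Finset.Ioc A B, g k)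
        + (Real.log B : ℂ) * ∑ k ∈ Finset.Ioc A B, g k‖ := by rw [sub_add_cancel]
    _ ≤ E * (Real.log B - Real.log A) + Real.log B * E := by
        refine (norm_add_le _ _).trans (add_le_add h1 ?_)
        rw [norm_mul, Complex.norm_real, Real.norm_of_nonneg hB]
        gcongr
    _ ≤ _ := by nlinarith [mul_nonneg hE0 hA]

lemma bilin (f g : ArithmeticFunction ℝ) (w : ℕ → ℂ) (n0 n1 : ℕ) :
    ∑ n ∈ Finset.Ioc n0 n1, (((f * g) n : ℝ) : ℂ) * w n =
      ∑ l ∈ Finset.Ioc 0 n1, ∑ m ∈ Finset.Ioc (n0 / l) (n1 / l), (f l : ℂ) * (g m : ℂ) * w (l * m) := by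
  have h1 : ∀ n ∈ Finset.Ioc n0 n1, (((f * g) n : ℝ) : ℂ) * w n =
      ∑ l ∈ Finset.Ioc 0 n1, ∑ m ∈ Finset.Ioc 0 n1,
        (if l * m = n then (f l : ℂ) * (g m : ℂ) * w (l * m) else 0) := by
    intro n hn
    rw [Finset.mem_Ioc] at hn
    rw [ArithmeticFunction.mul_apply, Nat.divisorsAntidiagonal_eq_prod_filter_of_le (by omega) hn.2,
      Finset.sum_filter, Finset.sum_product]
    push_cast
    rw [Finset.sum_mul]
    refine Finset.sum_congr rfl fun l _ => ?_
    rw [Finset.sum_mul]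
    refine Finset.sum_congr rfl fun m _ => ?_
    split_ifs with h
    · rw [← h]; push_cast; ring
    · simp
  rw [Finset.sum_congr rfl h1, Finset.sum_comm]
  refine Finset.sum_congr rfl fun l hl => ?_
  rw [Finset.mem_Ioc] at hl
  rw [Finset.sum_comm]
  rw [← sum_ioc_ind (n0 / l) (n1 / l) n1 (Nat.div_le_self _ _)]
  refine Finset.sum_congr rfl fun m _ => ?_
  rw [Finset.sum_ite_eq]
  have : (l * m ∈ Finset.Ioc n0 n1) ↔ (m ∈ Finset.Ioc (n0 / l) (n1 / l)) := by
    rw [Finset.mem_Ioc, Finset.mem_Ioc, Nat.div_lt_iff_lt_mul hl.1, Nat.le_div_iff_mul_le hl.1, mul_comm l]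
  simp only [this]

/-- restriction of an arithmetic function to a set of integers -/
noncomputable def rs (f : ArithmeticFunction ℝ) (p : ℕ → Prop) [DecidablePred p] : ArithmeticFunction ℝ :=
  ⟨fun n => if p n then f n else 0, by simp⟩

lemma rs_apply (f : ArithmeticFunction ℝ) (p : ℕ → Prop) [DecidablePred p] (n : ℕ) :
    rs f p n = if p n then f n else 0 := rfl

/-- the real Moebius function -/
noncomputable def mur : ArithmeticFunction ℝ := ((ArithmeticFunction.moebius : ArithmeticFunction ℤ) : ArithmeticFunction ℝ)
/-- the real zeta function -/
noncomputable def zer : ArithmeticFunction ℝ := ((ArithmeticFunction.zeta : ArithmeticFunction ℕ) : ArithmeticFunction ℝ)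

lemma mur_zer : mur * zer = 1 := ArithmeticFunction.coe_moebius_mul_coe_zeta

lemma vaughan (V U W : ℕ) :
    rs ArithmeticFunction.vonMangoldt (fun n => V < n) =
      rs mur (fun n => n ≤ U) * ArithmeticFunction.log
      - (rs ArithmeticFunction.vonMangoldt (fun n => n ≤ V) * rs mur (fun n => n ≤ U)) * zer
      + rs ArithmeticFunction.vonMangoldt (fun n => V < n ∧ n ≤ W) * (zer * rs mur (fun n => U < n))
      + (zer * rs mur (fun n => U < n)) * rs ArithmeticFunction.vonMangoldt (fun n => V < n ∧ W < n) := by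
  have hl : (ArithmeticFunction.log : ArithmeticFunction ℝ) = ArithmeticFunction.vonMangoldt * zer :=
    ArithmeticFunction.vonMangoldt_mul_zeta.symm
  have h1 : (ArithmeticFunction.vonMangoldt : ArithmeticFunction ℝ) =
      rs ArithmeticFunction.vonMangoldt (fun n => n ≤ V) + rs ArithmeticFunction.vonMangoldt (fun n => V < n) := by
    ext n
    rw [ArithmeticFunction.add_apply, rs_apply, rs_apply]
    split_ifs <;> first | omega | simp
  have h2 : mur = rs mur (fun n => n ≤ U) + rs mur (fun n => U < n) := by
    ext n
    rw [ArithmeticFunction.add_apply, rs_apply, rs_apply]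
    split_ifs <;> first | omega | simp
  have h3 : rs ArithmeticFunction.vonMangoldt (fun n => V < n) =
      rs ArithmeticFunction.vonMangoldt (fun n => V < n ∧ n ≤ W) +
      rs ArithmeticFunction.vonMangoldt (fun n => V < n ∧ W < n) := by
    ext n
    rw [ArithmeticFunction.add_apply, rs_apply, rs_apply, rs_apply]
    split_ifs <;> first | omega | simp
  have h4 := mur_zer
  rw [hl]
  set a := rs ArithmeticFunction.vonMangoldt (fun n => n ≤ V)
  set b := rs ArithmeticFunction.vonMangoldt (fun n => V < n)
  set b1 := rs ArithmeticFunction.vonMangoldt (fun n => V < n ∧ n ≤ W)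
  set b2 := rs ArithmeticFunction.vonMangoldt (fun n => V < n ∧ W < n)
  set u := rs mur (fun n => n ≤ U)
  set v := rs mur (fun n => U < n)
  calc b = b * (mur * zer) := by rw [h4, mul_one]
    _ = b * ((u + v) * zer) := by rw [← h2]
    _ = u * ((a + b) * zer) - a * u * zer + b * (zer * v) := by ring
    _ = u * (ArithmeticFunction.vonMangoldt * zer) - a * u * zer + b * (zer * v) := by rw [← h1]
    _ = u * (ArithmeticFunction.vonMangoldt * zer) - a * u * zer + (b1 + b2) * (zer * v) := by rw [← h3]
    _ = _ := by ring

lemma abs_mur (n : ℕ) : |mur n| ≤ 1 := by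
  unfold mur
  rw [ArithmeticFunction.intCoe_apply]
  exact_mod_cast ArithmeticFunction.abs_moebius_le_one

lemma coef2 (V U n : ℕ) :
    |(rs ArithmeticFunction.vonMangoldt (fun n => n ≤ V) * rs mur (fun n => n ≤ U)) n| ≤ Real.log n ∧
    (V * U < n → (rs ArithmeticFunction.vonMangoldt (fun n => n ≤ V) * rs mur (fun n => n ≤ U)) n = 0) := by
  constructor
  · rw [ArithmeticFunction.mul_apply, ← ArithmeticFunction.vonMangoldt_sum,
      ← Nat.map_div_right_divisors, Finset.sum_map]
    refine (Finset.abs_sum_le_sum_abs _ _).trans (Finset.sum_le_sum fun i _ => ?_)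
    simp only [Function.Embedding.coeFn_mk, rs_apply, abs_mul]
    have h0 : 0 ≤ ArithmeticFunction.vonMangoldt i := ArithmeticFunction.vonMangoldt_nonneg
    have h1 : |if i ≤ V then ArithmeticFunction.vonMangoldt i else 0| ≤ ArithmeticFunction.vonMangoldt i := by
      split_ifs
      · rw [abs_of_nonneg h0]
      · simpa using h0
    have h2 : |if n / i ≤ U then mur (n / i) else 0| ≤ 1 := by
      split_ifs
      · exact abs_mur _
      · simp
    calc _ ≤ ArithmeticFunction.vonMangoldt i * 1 := mul_le_mul h1 h2 (abs_nonneg _) h0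
      _ = _ := mul_one _
  · intro h
    rw [ArithmeticFunction.mul_apply]
    refine Finset.sum_eq_zero fun x hx => ?_
    rw [rs_apply, rs_apply]
    have := (Nat.mem_divisorsAntidiagonal.1 hx).1
    split_ifs with c1 c2
    · exfalso
      have := Nat.mul_le_mul c1 c2
      omega
    all_goals simp

lemma coef3 (U n : ℕ) :
    |(zer * rs mur (fun n => U < n)) n| ≤ n.divisors.card ∧
    (n ≤ U → (zer * rs mur (fun n => U < n)) n = 0) := by
  constructor
  · rw [mul_comm]
    unfold zer
    rw [ArithmeticFunction.coe_mul_zeta_apply]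
    refine (Finset.abs_sum_le_sum_abs _ _).trans ?_
    have := Finset.sum_le_card_nsmul n.divisors (fun i => |rs mur (fun n => U < n) i|) 1 (by
      intro i _
      rw [rs_apply]
      split_ifs
      · exact abs_mur _
      · simp)
    simpa using this
  · intro h
    rw [ArithmeticFunction.mul_apply]
    refine Finset.sum_eq_zero fun x hx => ?_
    rw [rs_apply]
    have h1 := (Nat.mem_divisorsAntidiagonal.1 hx)
    have h2 : x.2 ≤ n := Nat.le_of_dvd (by omega) (Dvd.intro_left _ h1.1)
    rw [if_neg (by omega), mul_zero]


lemma harm_sum (n1 : ℕ) (N K : ℝ) (hN : 2 ≤ N) (hK : 0 ≤ K) (hn1 : (n1 : ℝ) ≤ 2 * N) (F : ℕ → ℂ)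
    (hF : ∀ l ∈ Finset.Ioc 0 n1, ‖F l‖ ≤ K * (1 / (l : ℝ))) :
    ‖∑ l ∈ Finset.Ioc 0 n1, F l‖ ≤ K * (2 * (1 + Real.log N)) := by
  refine (norm_sum_le _ _).trans ((Finset.sum_le_sum hF).trans ?_)
  rw [← Finset.mul_sum]
  refine mul_le_mul_of_nonneg_left ?_ hK
  have h1 := sum_inv_le (n1 + 1) (2 * N) (by linarith) (by push_cast; linarith)
  have h2 : Finset.Ioc 0 n1 = Finset.Ico 1 (n1 + 1) := by ext; simp; omega
  rw [h2]
  refine h1.trans ?_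
  rw [Real.log_mul (by norm_num) (by linarith)]
  have h3 : 0 ≤ Real.log N := Real.log_nonneg (by linarith)
  linarith [Real.log_two_lt_d9]

lemma log_le_L (N : ℝ) (n n1 : ℕ) (hN : 2 ≤ N) (hn : n ≤ n1) (hn1 : (n1 : ℝ) ≤ 2 * N) :
    Real.log n ≤ 1 + Real.log N := by
  have h3 : 0 ≤ Real.log N := Real.log_nonneg (by linarith)
  rcases Nat.eq_zero_or_pos n with h | h
  · subst h; simp; linarith
  have h4 : (n : ℝ) ≤ 2 * N := le_trans (by exact_mod_cast hn) hn1
  have h5 := Real.log_le_log (by exact_mod_cast h) h4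
  rw [Real.log_mul (by norm_num) (by linarith)] at h5
  linarith [Real.log_two_lt_d9]

lemma mem_ioc_div {n0 n1 l m : ℕ} (hl : 0 < l) (hm : m ∈ Finset.Ioc (n0 / l) (n1 / l)) :
    n0 < l * m ∧ l * m ≤ n1 := by
  rw [Finset.mem_Ioc, Nat.div_lt_iff_lt_mul hl, Nat.le_div_iff_mul_le hl] at hm
  rw [mul_comm]; exact hm

lemma norm4 (x y z u : ℂ) (p q r s : ℝ) (hx : ‖x‖ ≤ p) (hy : ‖y‖ ≤ q) (hz : ‖z‖ ≤ r) (hu : ‖u‖ ≤ s) :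
    ‖x - y + z + u‖ ≤ p + q + r + s :=
  (norm_add_le _ _).trans (add_le_add ((norm_add_le _ _).trans
    (add_le_add ((norm_sub_le _ _).trans (add_le_add hx hy)) hz)) hu)

set_option maxHeartbeats 2000000 in
lemma perdh (γ c σ θ δ : ℝ) (hγ0 : 97 / 100 < γ) (hγ1 : γ < 1) (hc1 : 1 < c) (hc3 : c < 3)
    (hσ : 0 < σ) (hσ1 : σ ≤ 1 / 40) (hθ : 0 ≤ θ) (hθσ : θ + 8 * σ ≤ 1 / 5) (hδ : 0 < δ) (hδ1 : δ ≤ 1) :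
    ∃ N0 : ℝ, 2 ≤ N0 ∧ ∀ N : ℝ, N0 ≤ N → ∀ (t : ℝ) (a : ℤ) (h d : ℕ),
      |t| * N ^ c ≤ N ^ (1 / 3 : ℝ) → 0 < h → (h : ℝ) ≤ N ^ σ → 0 < d → (d : ℝ) ≤ N ^ θ →
      Int.gcd d a = 1 →
      ‖∑ n ∈ Finset.Ioc ⌊N⌋₊ ⌊2 * N⌋₊, ((ArithmeticFunction.vonMangoldt n : ℝ) : ℂ) * gg γ c t a h d n‖
        ≤ N ^ (1 - σ) / d * N ^ δ := by
  obtain ⟨N1, h11, HI⟩ := typeI γ c σ θ hγ0 hγ1 hc1 hc3 hσ hσ1 hθ hθσ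
  obtain ⟨N2, h21, HII⟩ := typeII γ c σ θ hγ0 hγ1 hc1 hc3 hσ hσ1 hθσ
  obtain ⟨Ct, hCt, Htau⟩ := tau_bound (δ / 3) (by linarith)
  obtain ⟨N3, h31, h32⟩ := ev_log (24 * Ct) (δ / 3) (by linarith)
  obtain ⟨N4, h41, h42⟩ := ev_log 2 σ hσ
  refine ⟨max (max N1 N2) (max N3 N4), le_max_of_le_left (le_max_of_le_right h21), ?_⟩
  intro N hN t a h d ht hh hhN hd hdN hda
  have hNN1 : N1 ≤ N := le_trans (le_trans (le_max_left _ _) (le_max_left _ _)) hN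
  have hNN2 : N2 ≤ N := le_trans (le_trans (le_max_right _ _) (le_max_left _ _)) hN
  have hL3 := h32 N (le_trans (le_trans (le_max_left _ _) (le_max_right _ _)) hN)
  have hL4 := h42 N (le_trans (le_trans (le_max_right _ _) (le_max_right _ _)) hN)
  have HI := HI N hNN1 t a h d
  have HII := HII N hNN2 t a h d ht hh hhN hd hdN hda
  have hN2 : 2 ≤ N := h21.trans hNN2
  have hN0 : 0 < N := by linarith
  have hlog : 0 ≤ Real.log N := Real.log_nonneg (by linarith)
  set n0 := ⌊N⌋₊ with hn0
  set n1 := ⌊2 * N⌋₊ with hn1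
  have hn1N : (n1 : ℝ) ≤ 2 * N := Nat.floor_le (by linarith)
  have hn0N : ∀ n : ℕ, n0 < n → N ≤ (n : ℝ) := fun n hn => ((Nat.floor_lt hN0.le).1 hn).le
  set L := 1 + Real.log N with hL
  have hL1 : 1 ≤ L := by linarith
  set E := N ^ (1 - σ) with hE
  have hE0 : 0 < E := Real.rpow_pos_of_pos hN0 _
  have hdR : (0 : ℝ) < d := by exact_mod_cast hd
  set V := ⌊N ^ (θ + 3 * σ)⌋₊ with hV
  set W := Nat.sqrt n1 with hW
  have hV1 : 2 * N ^ (θ + 2 * σ) ≤ (V : ℝ) + 1 := by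
    refine le_trans ?_ (Nat.lt_floor_add_one _).le
    rw [show θ + 3 * σ = σ + (θ + 2 * σ) by ring, Real.rpow_add hN0 σ (θ + 2 * σ)]
    refine mul_le_mul_of_nonneg_right (by nlinarith) (Real.rpow_nonneg hN0.le _)
  have hVle : (V : ℝ) ≤ N ^ (θ + 3 * σ) := Nat.floor_le (Real.rpow_nonneg hN0.le _)
  have hVV : ((V * V : ℕ) : ℝ) ≤ N ^ (2 * θ + 6 * σ) := by
    rw [show 2 * θ + 6 * σ = (θ + 3 * σ) + (θ + 3 * σ) by ring, Real.rpow_add hN0]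
    push_cast
    exact mul_le_mul hVle hVle (Nat.cast_nonneg _) (Real.rpow_nonneg hN0.le _)
  have hVn0 : V ≤ n0 := by
    apply Nat.floor_le_floor
    conv_rhs => rw [← Real.rpow_one N]
    exact Real.rpow_le_rpow_of_exponent_le (by linarith) (by linarith)
  have hW2 : (W : ℝ) ^ 2 ≤ 2 * N := by
    refine le_trans ?_ hn1N
    exact_mod_cast Nat.sqrt_le' n1
  have hWlt : n1 < (W + 1) * (W + 1) := by
    exact Nat.lt_succ_sqrt n1
  have hioc : ∀ n ∈ Finset.Ioc n0 n1, N ≤ (n : ℝ) := fun n hn => hn0N n (Finset.mem_Ioc.1 hn).1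
  -- type I estimate
  have TI : ∀ l : ℕ, 0 < l → l ≤ V * V → ∀ B' ≤ n1 / l,
      ‖∑ k ∈ Finset.Ioc (n0 / l) B', gg γ c t a h d (l * k)‖ ≤ E / (l * d) := by
    intro l hl hlV B' hB'
    refine HI l ht hh hhN hd hdN hl (le_trans (by exact_mod_cast hlV) hVV) hda _ _ ?_
    intro k hk
    have hk' : k ∈ Finset.Ioc (n0 / l) (n1 / l) := by
      rw [Finset.mem_Ioc] at hk ⊢
      exact ⟨hk.1, hk.2.trans hB'⟩
    have := mem_ioc_div hl hk'
    refine ⟨hn0N _ this.1, ?_⟩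
    have h5 : ((l * k : ℕ) : ℝ) ≤ (n1 : ℝ) := by exact_mod_cast this.2
    linarith
  set w := gg γ c t a h d with hw
  have hVV1 : V ≤ V * V := Nat.le_mul_self V
  -- first sum
  have T1 : ‖∑ n ∈ Finset.Ioc n0 n1, (((rs mur (fun n => n ≤ V) * ArithmeticFunction.log) n : ℝ) : ℂ) * w n‖
      ≤ 4 * L ^ 2 * (E / d) := by
    rw [bilin]
    refine (harm_sum n1 N (2 * L * (E / d)) hN2 (by positivity) hn1N _ ?_).trans (le_of_eq (by rw [hL]; ring))
    intro l hl
    rw [Finset.mem_Ioc] at hl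
    have hlR : (0 : ℝ) < l := by exact_mod_cast hl.1
    simp_rw [mul_assoc]
    rw [← Finset.mul_sum, norm_mul, rs_apply]
    split_ifs with hc
    · have h1 : ‖((mur l : ℝ) : ℂ)‖ ≤ 1 := by
        rw [Complex.norm_real]; exact abs_mur l
      have h2 := abel_log (n0 / l) (fun k => w (l * k)) (E / (l * d)) (n1 / l)
        (Nat.div_le_div_right (Nat.floor_le_floor (by linarith)))
        (fun B' _ hB => TI l hl.1 (hc.trans hVV1) B' hB)
      have h3 : Real.log ((n1 / l : ℕ) : ℝ) ≤ L := log_le_L N _ n1 hN2 (Nat.div_le_self _ _) hn1N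
      have h2' : ‖∑ k ∈ Finset.Ioc (n0 / l) (n1 / l), ((ArithmeticFunction.log k : ℝ) : ℂ) * w (l * k)‖
          ≤ 2 * Real.log ((n1 / l : ℕ) : ℝ) * (E / (l * d)) := by
        simpa [ArithmeticFunction.log_apply] using h2
      calc _ ≤ 1 * (2 * Real.log ((n1 / l : ℕ) : ℝ) * (E / (l * d))) := by
            exact mul_le_mul h1 h2' (norm_nonneg _) (by norm_num)
        _ ≤ 1 * (2 * L * (E / (l * d))) := by gcongr
        _ = _ := by field_simp
    · simp; positivity
  -- second sum
  have T2 : ‖∑ n ∈ Finset.Ioc n0 n1, ((((rs ArithmeticFunction.vonMangoldt (fun n => n ≤ V) *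
      rs mur (fun n => n ≤ V)) * zer) n : ℝ) : ℂ) * w n‖ ≤ 2 * L ^ 2 * (E / d) := by
    rw [bilin]
    refine (harm_sum n1 N (L * (E / d)) hN2 (by positivity) hn1N _ ?_).trans (le_of_eq (by rw [hL]; ring))
    intro l hl
    rw [Finset.mem_Ioc] at hl
    have hlR : (0 : ℝ) < l := by exact_mod_cast hl.1
    simp_rw [mul_assoc]
    rw [← Finset.mul_sum, norm_mul]
    obtain ⟨c1, c2⟩ := coef2 V V l
    by_cases hc : V * V < l
    · rw [c2 hc]; simp; positivity
    · have h3 : Real.log (l : ℝ) ≤ L := log_le_L N _ n1 hN2 hl.2 hn1N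
      have h1 : ‖∑ k ∈ Finset.Ioc (n0 / l) (n1 / l), ((zer k : ℝ) : ℂ) * w (l * k)‖ ≤ E / (l * d) := by
        refine le_trans (le_of_eq ?_) (TI l hl.1 (not_lt.1 hc) _ le_rfl)
        congr 1
        refine Finset.sum_congr rfl fun k hk => ?_
        have hk0 : k ≠ 0 := by
          have := (Finset.mem_Ioc.1 hk).1
          exact ((Nat.zero_le _).trans_lt this).ne'
        have : zer k = 1 := by
          unfold zer
          rw [ArithmeticFunction.natCoe_apply, ArithmeticFunction.zeta_apply_ne hk0]; simp
        rw [this]; simp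
      rw [Complex.norm_real, Real.norm_eq_abs]
      calc _ ≤ L * (E / (l * d)) := mul_le_mul (c1.trans h3) h1 (norm_nonneg _) (by linarith)
        _ = _ := by field_simp
  -- truncated coefficients
  set Y := Ct * (2 * N) ^ (δ / 3) with hY
  have h2Nd : 1 ≤ (2 * N) ^ (δ / 3) := Real.one_le_rpow (by linarith) (by linarith)
  have hY1 : 1 ≤ Y := by nlinarith
  set lam := fun l : ℕ => if l ≤ n1 then ((ArithmeticFunction.vonMangoldt l : ℝ) : ℂ) else 0 with hlam
  have hlamb : ∀ l, ‖lam l‖ ≤ L := by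
    intro l
    simp only [hlam]
    split_ifs with hc
    · rw [Complex.norm_real, Real.norm_eq_abs, abs_of_nonneg ArithmeticFunction.vonMangoldt_nonneg]
      exact ArithmeticFunction.vonMangoldt_le_log.trans (log_le_L N _ n1 hN2 hc hn1N)
    · simp; linarith
  set bet := fun l : ℕ => if l ≤ n1 then (((zer * rs mur (fun n => V < n)) l : ℝ) : ℂ) else 0 with hbet
  have hbetb : ∀ l, ‖bet l‖ ≤ Y := by
    intro l
    simp only [hbet]
    split_ifs with hc
    · rw [Complex.norm_real, Real.norm_eq_abs]
      rcases Nat.eq_zero_or_pos l with h0 | h0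
      · subst h0; simp; linarith
      refine (coef3 V l).1.trans ((Htau l h0.ne').trans ?_)
      have : (l : ℝ) ≤ 2 * N := le_trans (by exact_mod_cast hc) hn1N
      simp only [hY]
      gcongr
    · simp; linarith
  have T3 : ‖∑ n ∈ Finset.Ioc n0 n1, (((rs ArithmeticFunction.vonMangoldt (fun n => V < n ∧ n ≤ W) *
      (zer * rs mur (fun n => V < n))) n : ℝ) : ℂ) * w n‖ ≤ 3 * L ^ 2 * Y * (E / d) := by
    rw [bilin]
    have h1 := HII n0 n1 hioc hn1N V W lam bet L Y (by linarith) (by linarith) hV1 hW2 hlamb hbetb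
    refine le_trans (le_of_eq ?_) (h1.trans (le_of_eq (by ring)))
    congr 1
    symm
    have hsub : Finset.Ioc V W ⊆ Finset.Ioc 0 n1 :=
      Finset.Ioc_subset_Ioc (Nat.zero_le _) (Nat.sqrt_le_self n1)
    rw [← Finset.sum_subset hsub]
    · refine Finset.sum_congr rfl fun l hl => Finset.sum_congr rfl fun m hm => ?_
      have hl1 := Finset.mem_Ioc.1 (hsub hl)
      have hm1 : m ≤ n1 := (Finset.mem_Ioc.1 hm).2.trans (Nat.div_le_self _ _)
      simp only [hlam, hbet]
      rw [if_pos hl1.2, if_pos hm1, rs_apply, if_pos (Finset.mem_Ioc.1 hl)]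
    · intro l _ hl
      rw [Finset.mem_Ioc] at hl
      refine Finset.sum_eq_zero fun m _ => ?_
      rw [rs_apply, if_neg hl]; simp
  have T4 : ‖∑ n ∈ Finset.Ioc n0 n1, ((((zer * rs mur (fun n => V < n)) *
      rs ArithmeticFunction.vonMangoldt (fun n => V < n ∧ W < n)) n : ℝ) : ℂ) * w n‖
      ≤ 3 * L ^ 2 * Y * (E / d) := by
    rw [bilin]
    have h1 := HII n0 n1 hioc hn1N V W bet (fun m => if V < m ∧ W < m then lam m else 0) Y L
      (by linarith) (by linarith) hV1 hW2 hbetb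
      (by intro m; split_ifs; · exact hlamb m
          · simp; linarith)
    refine le_trans (le_of_eq ?_) (h1.trans (le_of_eq (by ring)))
    congr 1
    symm
    have hsub : Finset.Ioc V W ⊆ Finset.Ioc 0 n1 :=
      Finset.Ioc_subset_Ioc (Nat.zero_le _) (Nat.sqrt_le_self n1)
    rw [← Finset.sum_subset hsub]
    · refine Finset.sum_congr rfl fun l hl => Finset.sum_congr rfl fun m hm => ?_
      have hl1 := Finset.mem_Ioc.1 (hsub hl)
      have hm1 : m ≤ n1 := (Finset.mem_Ioc.1 hm).2.trans (Nat.div_le_self _ _)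
      simp only [hlam, hbet]
      rw [if_pos hl1.2, if_pos hm1, rs_apply]
      split_ifs <;> simp
    · intro l hl0 hl
      rw [Finset.mem_Ioc] at hl hl0
      refine Finset.sum_eq_zero fun m hm => ?_
      by_cases hc : l ≤ V
      · rw [(coef3 V l).2 hc]; simp
      · have hlW : W + 1 ≤ l := by
          by_contra hcon
          exact hl ⟨by omega, by omega⟩
        have hmm := mem_ioc_div hl0.1 hm
        rw [rs_apply, if_neg]
        · simp
        · rintro ⟨_, hm2⟩
          have := Nat.mul_le_mul hlW hm2
          simp only [Nat.succ_eq_add_one] at this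
          omega
  -- assemble
  have hsplit : ∑ n ∈ Finset.Ioc n0 n1, ((ArithmeticFunction.vonMangoldt n : ℝ) : ℂ) * w n =
      ∑ n ∈ Finset.Ioc n0 n1, (((rs mur (fun n => n ≤ V) * ArithmeticFunction.log) n : ℝ) : ℂ) * w n
      - ∑ n ∈ Finset.Ioc n0 n1, ((((rs ArithmeticFunction.vonMangoldt (fun n => n ≤ V) *
      rs mur (fun n => n ≤ V)) * zer) n : ℝ) : ℂ) * w n
      + ∑ n ∈ Finset.Ioc n0 n1, (((rs ArithmeticFunction.vonMangoldt (fun n => V < n ∧ n ≤ W) *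
      (zer * rs mur (fun n => V < n))) n : ℝ) : ℂ) * w n
      + ∑ n ∈ Finset.Ioc n0 n1, ((((zer * rs mur (fun n => V < n)) *
      rs ArithmeticFunction.vonMangoldt (fun n => V < n ∧ W < n)) n : ℝ) : ℂ) * w n := by
    rw [← Finset.sum_sub_distrib, ← Finset.sum_add_distrib, ← Finset.sum_add_distrib]
    refine Finset.sum_congr rfl fun n hn => ?_
    have hnV : V < n := lt_of_le_of_lt hVn0 (Finset.mem_Ioc.1 hn).1
    have h1 : ArithmeticFunction.vonMangoldt n = rs ArithmeticFunction.vonMangoldt (fun n => V < n) n := by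
      rw [rs_apply, if_pos hnV]
    rw [h1, vaughan V V W, ArithmeticFunction.add_apply, ArithmeticFunction.add_apply]
    rw [sub_eq_add_neg, ArithmeticFunction.add_apply, ArithmeticFunction.neg_apply]
    push_cast
    ring
  rw [hsplit]
  have hEd : 0 < E / d := by positivity
  have hsum : 12 * L ^ 2 * Y ≤ N ^ δ := by
    have h1 : (2 * N) ^ (δ / 3) ≤ 2 * N ^ (δ / 3) := by
      rw [Real.mul_rpow (by norm_num) hN0.le]
      refine mul_le_mul_of_nonneg_right ?_ (Real.rpow_nonneg hN0.le _)
      conv_rhs => rw [← Real.rpow_one 2]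
      exact Real.rpow_le_rpow_of_exponent_le (by norm_num) (by linarith)
    have h2 : N ^ δ = N ^ (δ / 3) * N ^ (δ / 3) * N ^ (δ / 3) := by
      rw [← Real.rpow_add hN0, ← Real.rpow_add hN0]; congr 1; ring
    set P := N ^ (δ / 3)
    have hP0 : 0 < P := Real.rpow_pos_of_pos hN0 _
    rw [h2]
    have hCL : 0 ≤ 24 * Ct * L := by positivity
    calc 12 * L ^ 2 * Y ≤ 12 * L ^ 2 * (Ct * (2 * P)) := by rw [hY]; gcongr
      _ = (24 * Ct * L) * L * P := by ring
      _ ≤ P * P * P := by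
        have h5 : L ≤ P := by nlinarith
        gcongr
  refine (norm4 _ _ _ _ _ _ _ _ T1 T2 T3 T4).trans ?_
  calc 4 * L ^ 2 * (E / d) + 2 * L ^ 2 * (E / d) + 3 * L ^ 2 * Y * (E / d) + 3 * L ^ 2 * Y * (E / d) 
    _ ≤ (12 * L ^ 2 * Y) * (E / d) := by
        have h6 : 6 * L ^ 2 * (E / d) ≤ 6 * L ^ 2 * (E / d) * Y := le_mul_of_one_le_right (by positivity) hY1
        nlinarith
    _ ≤ N ^ δ * (E / d) := by gcongr
    _ = _ := by ring


open scoped Classical in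
/-- The estimate `(31)`: with `θ = (443/55)γ - 173/22 - ε`, `X^{1-ε} ≤ N ≤ X`,
`H = N^{1-γ+ε}`, `N^θ ≤ D ≤ N^{θ+ε/2}`, `|t| ≤ X^{1/4-c}`, and `|c(d,h)| = 1`,
`|∑_{n ∼ N} Λ(n) G(n)| ≪ N/(log N)^A`, where
`G(n) = ∑_{1 ≤ h ≤ H} F_h(n) e(tn^c - hn^γ)` and
`F_h(n) = ∑_{d ≤ D, (d,a)=1, d ∣ n-a} c(d,h)`. -/
theorem vonMangoldt_G_estimate (γ : ℝ) (hγ₁ : 865 / 886 < γ) (hγ₂ : γ < 1)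
    (a : ℤ) (ha : a ≠ 0) (c : ℝ) (hc₁ : 1 < c) (hc₂ : c < 3) (hc₃ : c ≠ 2)
    (A : ℝ) (hA : 0 < A) :
    ∃ ε₀ : ℝ, 0 < ε₀ ∧ ∀ ε : ℝ, 0 < ε → ε < ε₀ →
      ∃ C : ℝ, 0 < C ∧ ∃ X₀ : ℝ, ∀ X : ℝ, X₀ ≤ X →
      ∀ N H D t : ℝ, ∀ cdh : ℕ → ℕ → ℂ,
        X ^ (1 - ε) ≤ N → N ≤ X →
        H = N ^ (1 - γ + ε) →
        N ^ ((443 / 55) * γ - 173 / 22 - ε) ≤ D →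
        D ≤ N ^ ((443 / 55) * γ - 173 / 22 - ε + ε / 2) →
        |t| ≤ X ^ ((1 : ℝ) / 4 - c) →
        (∀ d h : ℕ, ‖cdh d h‖ = 1) →
        ‖∑ n ∈ Finset.Ioc ⌊N⌋₊ ⌊2 * N⌋₊,
            ((ArithmeticFunction.vonMangoldt n : ℝ) : ℂ) *
              ∑ h ∈ Finset.Icc 1 ⌊H⌋₊,
                (∑ d ∈ (Finset.Icc 1 ⌊D⌋₊).filter
                    (fun d : ℕ => Int.gcd (d : ℤ) a = 1 ∧ (d : ℤ) ∣ ((n : ℤ) - a)),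
                  cdh d h) *
                e (t * (n : ℝ) ^ c - (h : ℝ) * (n : ℝ) ^ γ)‖
        ≤ C * N / (Real.log N) ^ A := by
  have hη : 0 < 1 - γ := by linarith
  refine ⟨3 / 10000, by norm_num, fun ε hε hε1 => ?_⟩
  set θ := (443 / 55) * γ - 173 / 22 with hθ
  have hθ0 : 0 ≤ θ := by rw [hθ]; linarith
  set σ := 1 - γ + 3 * ε with hσ
  obtain ⟨N1, h11, H1⟩ := perdh γ c σ θ ε (by linarith) hγ₂ hc₁ hc₂ (by rw [hσ]; linarith)
    (by rw [hσ]; linarith) hθ0 (by rw [hσ, hθ]; linarith) hε (by linarith)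
  obtain ⟨N2, h21, H2⟩ := ev_log 1 (ε / (A + 1)) (by positivity)
  refine ⟨1, one_pos, (max N1 N2) ^ 2, ?_⟩
  intro X hX N H D t cdh hXN hNX hH hD1 hD2 ht hcdh
  set M := max N1 N2 with hM
  have hM2 : 2 ≤ M := h11.trans (le_max_left _ _)
  have hX1 : 1 ≤ X := by nlinarith
  have hX0 : 0 < X := by linarith
  have hMN : M ≤ N := by
    refine le_trans ?_ hXN
    calc M = (M ^ 2) ^ (1 / 2 : ℝ) := by
          rw [← Real.sqrt_eq_rpow, Real.sqrt_sq (by linarith)]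
      _ ≤ X ^ (1 / 2 : ℝ) := Real.rpow_le_rpow (by positivity) hX (by norm_num)
      _ ≤ _ := Real.rpow_le_rpow_of_exponent_le hX1 (by linarith)
  have hN2 : 2 ≤ N := hM2.trans hMN
  have hN0 : 0 < N := by linarith
  have hN1 : 1 ≤ N := by linarith
  have H1 := H1 N ((le_max_left _ _).trans hMN) t a
  have H2 := H2 N ((le_max_right _ _).trans hMN)
  have htN : |t| * N ^ c ≤ N ^ (1 / 3 : ℝ) := by
    calc |t| * N ^ c ≤ X ^ ((1 : ℝ) / 4 - c) * X ^ c :=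
          mul_le_mul ht (Real.rpow_le_rpow hN0.le hNX (by linarith)) (Real.rpow_nonneg hN0.le _)
            (Real.rpow_nonneg hX0.le _)
      _ = X ^ (1 / 4 : ℝ) := by rw [← Real.rpow_add hX0]; congr 1; ring
      _ ≤ X ^ ((1 - ε) * (1 / 3)) := Real.rpow_le_rpow_of_exponent_le hX1 (by linarith)
      _ = (X ^ (1 - ε)) ^ (1 / 3 : ℝ) := Real.rpow_mul hX0.le _ _
      _ ≤ _ := Real.rpow_le_rpow (Real.rpow_nonneg hX0.le _) hXN (by norm_num)
  have hH0 : 0 ≤ H := by rw [hH]; exact Real.rpow_nonneg hN0.le _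
  have hHσ : H ≤ N ^ σ := by
    rw [hH]; exact Real.rpow_le_rpow_of_exponent_le hN1 (by rw [hσ]; linarith)
  have hDθ : D ≤ N ^ θ := hD2.trans (Real.rpow_le_rpow_of_exponent_le hN1 (by linarith))
  have hD0 : 0 ≤ D := le_trans (Real.rpow_nonneg hN0.le _) hD1
  have hDN : D ≤ N := by
    refine hDθ.trans ?_
    conv_rhs => rw [← Real.rpow_one N]
    exact Real.rpow_le_rpow_of_exponent_le hN1 (by rw [hθ]; linarith)
  set K := N ^ (1 - σ) * N ^ ε with hK
  have hK0 : 0 < K := mul_pos (Real.rpow_pos_of_pos hN0 _) (Real.rpow_pos_of_pos hN0 _)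
  have hswap : ∑ n ∈ Finset.Ioc ⌊N⌋₊ ⌊2 * N⌋₊,
            ((ArithmeticFunction.vonMangoldt n : ℝ) : ℂ) *
              ∑ h ∈ Finset.Icc 1 ⌊H⌋₊,
                (∑ d ∈ (Finset.Icc 1 ⌊D⌋₊).filter
                    (fun d : ℕ => Int.gcd (d : ℤ) a = 1 ∧ (d : ℤ) ∣ ((n : ℤ) - a)),
                  cdh d h) *
                e (t * (n : ℝ) ^ c - (h : ℝ) * (n : ℝ) ^ γ) =
      ∑ h ∈ Finset.Icc 1 ⌊H⌋₊, ∑ d ∈ Finset.Icc 1 ⌊D⌋₊,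
        (if Int.gcd (d : ℤ) a = 1 then cdh d h else 0) *
          ∑ n ∈ Finset.Ioc ⌊N⌋₊ ⌊2 * N⌋₊, ((ArithmeticFunction.vonMangoldt n : ℝ) : ℂ) * gg γ c t a h d n := by
    simp_rw [Finset.mul_sum, Finset.sum_filter, Finset.sum_mul, Finset.mul_sum]
    rw [Finset.sum_comm]
    refine Finset.sum_congr rfl fun h _ => ?_
    rw [Finset.sum_comm]
    refine Finset.sum_congr rfl fun d _ => Finset.sum_congr rfl fun n _ => ?_
    unfold gg
    by_cases c1 : Int.gcd (d : ℤ) a = 1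
    · by_cases c2 : (d : ℤ) ∣ ((n : ℤ) - a)
      · rw [if_pos ⟨c1, c2⟩, if_pos c1, if_pos c2]; ring
      · rw [if_neg (fun hh => c2 hh.2), if_neg c2]; simp
    · rw [if_neg (fun hh => c1 hh.1), if_neg c1]; simp
  rw [hswap]
  have hinv : ∑ d ∈ Finset.Icc 1 ⌊D⌋₊, 1 / (d : ℝ) ≤ 1 + Real.log N := by
    have h1 := sum_inv_le (⌊D⌋₊ + 1) N hN1 (by push_cast; linarith [Nat.floor_le hD0])
    have h2 : Finset.Icc 1 ⌊D⌋₊ = Finset.Ico 1 (⌊D⌋₊ + 1) := by ext; simp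
    rw [h2]; exact h1
  have hper : ∀ h ∈ Finset.Icc 1 ⌊H⌋₊, ‖∑ d ∈ Finset.Icc 1 ⌊D⌋₊,
        (if Int.gcd (d : ℤ) a = 1 then cdh d h else 0) *
          ∑ n ∈ Finset.Ioc ⌊N⌋₊ ⌊2 * N⌋₊, ((ArithmeticFunction.vonMangoldt n : ℝ) : ℂ) * gg γ c t a h d n‖
        ≤ K * (1 + Real.log N) := by
    intro h hh
    rw [Finset.mem_Icc] at hh
    have hhH : (h : ℝ) ≤ H := le_trans (by exact_mod_cast hh.2) (Nat.floor_le hH0)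
    refine le_trans ?_ (mul_le_mul_of_nonneg_left hinv hK0.le)
    rw [Finset.mul_sum]
    refine (norm_sum_le _ _).trans (Finset.sum_le_sum fun d hd => ?_)
    rw [Finset.mem_Icc] at hd
    have hdD : (d : ℝ) ≤ D := le_trans (by exact_mod_cast hd.2) (Nat.floor_le hD0)
    rw [norm_mul]
    split_ifs with hg
    · rw [hcdh, one_mul]
      refine (H1 h d htN hh.1 (hhH.trans hHσ) hd.1 (hdD.trans hDθ) hg).trans (le_of_eq ?_)
      rw [hK]; ring
    · rw [norm_zero, zero_mul]; positivity
  have hlog : 0 < Real.log N := Real.log_pos (by linarith)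
  have hmain : (1 + Real.log N) * (Real.log N) ^ A ≤ N ^ ε := by
    rw [one_mul] at H2
    calc (1 + Real.log N) * (Real.log N) ^ A ≤ (1 + Real.log N) * (1 + Real.log N) ^ A := by
          gcongr; linarith
      _ = (1 + Real.log N) ^ (A + 1) := by
          rw [Real.rpow_add (by linarith), Real.rpow_one, mul_comm]
      _ ≤ (N ^ (ε / (A + 1))) ^ (A + 1) := Real.rpow_le_rpow (by linarith) H2 (by linarith)
      _ = N ^ ε := by
          rw [← Real.rpow_mul hN0.le]; congr 1; field_simp
  have hlA : 0 < (Real.log N) ^ A := Real.rpow_pos_of_pos hlog _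
  calc _ ≤ ∑ h ∈ Finset.Icc 1 ⌊H⌋₊, K * (1 + Real.log N) :=
        (norm_sum_le _ _).trans (Finset.sum_le_sum hper)
    _ = (⌊H⌋₊ : ℝ) * (K * (1 + Real.log N)) := by simp
    _ ≤ H * (K * (1 + Real.log N)) := by
        refine mul_le_mul_of_nonneg_right (Nat.floor_le hH0) (by positivity)
    _ = N ^ (1 - ε) * (1 + Real.log N) := by
        rw [← mul_assoc, hK, hH, ← Real.rpow_add hN0, ← Real.rpow_add hN0]
        congr 2; rw [hσ]; ring
    _ ≤ _ := by
        rw [le_div_iff₀ hlA, one_mul, mul_assoc]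
        calc N ^ (1 - ε) * ((1 + Real.log N) * (Real.log N) ^ A) ≤ N ^ (1 - ε) * N ^ ε := by gcongr
          _ = N := by rw [← Real.rpow_add hN0]; simp
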